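/- arXiv:2003.04815 — 2 statements merged into one kernel-verified Lean document; each statement's English description precedes it below -/
import Mathlib

section
/- Fix s₀ > d/2 and let f, g ∈ H^s(𝕋^d;ℂ) with s ≥ s₀. Then fg = T_f g + T_g f + ℛ(f,g), where the remainder has Fourier coefficients ℛ(f,g)^(ξ) = (2π)^{-d} Σ_{η∈ℤ^d} a(ξ−η,η) f̂(ξ−η) ĝ(η) with, for every ρ ≥ 0, |a(v,w)| ≤ C_ρ (1+min(|v|,|w|))^ρ / (1+max(|v|,|w|))^ρ; moreover for every 0 ≤ ρ ≤ s − s₀: ‖ℛ(f,g)‖_{H^{s+ρ}} ≤ C ‖f‖_{H^s} ‖g‖_{H^s}. -/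
open MeasureTheory Complex Real Filter

noncomputable section

namespace QLNLS

/-- Points of `ℝ^d` (resp. the torus `𝕋^d = (ℝ/2πℤ)^d`, via `2π`-periodic functions). -/
abbrev Vec (d : ℕ) := Fin d → ℝ
/-- Frequency lattice `ℤ^d`. -/
abbrev Zd (d : ℕ) := Fin d → ℤ
/-- Functions on the torus. -/
abbrev Fn (d : ℕ) := Vec d → ℂ
/-- Sequences of Fourier coefficients. -/
abbrev Seq (d : ℕ) := Zd d → ℂ
/-- Symbols `a(x, ξ)`. -/
abbrev Sym (d : ℕ) := Vec d → Vec d → ℂ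

variable {d : ℕ}

/-- Euclidean norm `|ξ|`. -/
def rnorm (ξ : Vec d) : ℝ := Real.sqrt (∑ i, (ξ i) ^ 2)

/-- Euclidean norm `|n|` of a lattice point. -/
def znorm (n : Zd d) : ℝ := Real.sqrt (∑ i, ((n i : ℝ)) ^ 2)

/-- Japanese bracket `⟨n⟩ = (1+|n|²)^{1/2}`. -/
def jb (n : Zd d) : ℝ := Real.sqrt (1 + ∑ i, ((n i : ℝ)) ^ 2)

/-- Japanese bracket `⟨ξ⟩` for real frequencies. -/
def jbR (ξ : Vec d) : ℝ := Real.sqrt (1 + ∑ i, (ξ i) ^ 2)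

/-- `2π`-periodicity in every coordinate. -/
def Periodic2pi (u : Fn d) : Prop :=
  ∀ (x : Vec d) (n : Zd d), u (fun i => x i + 2 * π * (n i : ℝ)) = u x

/-- A fundamental domain of the torus. -/
def box (d : ℕ) : Set (Vec d) := Set.univ.pi fun _ : Fin d => Set.Ioc (0 : ℝ) (2 * π)

/-- Fourier coefficient `û(n) = (2π)^{-d/2} ∫ u(x) e^{-i n·x} dx`. -/
def fCoeff (u : Fn d) (n : Zd d) : ℂ :=
  (((2 * π : ℝ) ^ (-(d : ℝ) / 2) : ℝ) : ℂ) *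
    ∫ x in box d, u x * Complex.exp (-Complex.I * ((∑ i, (n i : ℝ) * x i : ℝ) : ℂ))

/-- Squared Sobolev norm of a coefficient sequence. -/
def hsNormSq (s : ℝ) (c : Seq d) : ℝ := ∑' n : Zd d, jb n ^ (2 * s) * ‖c n‖ ^ 2

/-- Sobolev norm of a coefficient sequence. -/
def hsNorm (s : ℝ) (c : Seq d) : ℝ := Real.sqrt (hsNormSq s c)

/-- Membership of a coefficient sequence in `H^s`. -/
def InHsSeq (s : ℝ) (c : Seq d) : Prop :=
  Summable fun n : Zd d => jb n ^ (2 * s) * ‖c n‖ ^ 2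

/-- `H^s` norm of a function on the torus. -/
def sobNorm (s : ℝ) (u : Fn d) : ℝ := hsNorm s (fCoeff u)

/-- `u ∈ H^s(𝕋^d;ℂ)`: `u` is `2π`-periodic, its Fourier coefficients are `H^s`-summable,
and `u` is represented by its Fourier series. -/
def InHs (s : ℝ) (u : Fn d) : Prop :=
  Periodic2pi u ∧ InHsSeq s (fCoeff u) ∧
    ∀ x : Vec d, HasSum
      (fun n : Zd d => (((2 * π : ℝ) ^ (-(d : ℝ) / 2) : ℝ) : ℂ) * fCoeff u n *
        Complex.exp (Complex.I * ((∑ i, (n i : ℝ) * x i : ℝ) : ℂ))) (u x)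

/-- Partial derivative `∂_{x_i}` of a function. -/
def pdF (i : Fin d) (u : Fn d) : Fn d := fun x => fderiv ℝ u x (Pi.single i 1)

/-- Partial derivative `∂_{x_i}` of a symbol. -/
def pdx (i : Fin d) (a : Sym d) : Sym d := fun x ξ => fderiv ℝ (fun y => a y ξ) x (Pi.single i 1)

/-- Partial derivative `∂_{ξ_i}` of a symbol. -/
def pdxi (i : Fin d) (a : Sym d) : Sym d := fun x ξ => fderiv ℝ (fun η => a x η) ξ (Pi.single i 1)

/-- Iterated mixed partial derivative of a symbol along a list of directions
(`Sum.inl j` = `∂_{x_j}`, `Sum.inr j` = `∂_{ξ_j}`). -/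
def mderiv (L : List (Fin d ⊕ Fin d)) (a : Sym d) : Sym d :=
  L.foldr (fun i b => match i with | Sum.inl j => pdx j b | Sum.inr j => pdxi j b) a

/-- Number of `ξ`-derivatives in a list of directions. -/
def nXi (L : List (Fin d ⊕ Fin d)) : ℕ := (L.filter fun i => i.isRight).length

/-- The set of values whose supremum is the symbol seminorm `|a|_{𝒩^m_s}`. -/
def symVals (m : ℝ) (s : ℕ) (a : Sym d) : Set ℝ :=
  { r | ∃ (L : List (Fin d ⊕ Fin d)) (x ξ : Vec d), L.length ≤ s ∧
        r = jbR ξ ^ (-m + (nXi L : ℝ)) * ‖mderiv L a x ξ‖ }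

/-- Symbol seminorm `|a|_{𝒩^m_s}`. -/
def symNorm (m : ℝ) (s : ℕ) (a : Sym d) : ℝ := sSup (symVals m s a)

/-- Membership in the symbol class `𝒩^m_s`. -/
def InSymClass (m : ℝ) (s : ℕ) (a : Sym d) : Prop :=
  ContDiff ℝ (s : ℕ∞) (Function.uncurry a) ∧ (∀ ξ, Periodic2pi fun x => a x ξ) ∧
    BddAbove (symVals m s a)

/-- Poisson bracket `{a,b}`. -/
def poisson (a b : Sym d) : Sym d := fun x ξ =>
  ∑ j, (pdxi j a x ξ * pdx j b x ξ - pdx j a x ξ * pdxi j b x ξ)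

/-- The second-order bracket `σ(a,b)`. -/
def sigmaB (a b : Sym d) : Sym d := fun x ξ =>
  ∑ j, ∑ k,
    (pdxi j (pdxi k a) x ξ * pdx j (pdx k b) x ξ
      - 2 * pdx j (pdxi k a) x ξ * pdxi j (pdx k b) x ξ
      + pdx j (pdx k a) x ξ * pdxi j (pdxi k b) x ξ)

/-- An admissible cut-off function `χ`. -/
structure IsCutoff (χ : ℝ → ℝ) : Prop where
  smooth : ContDiff ℝ (⊤ : ℕ∞) χ
  mem : ∀ t : ℝ, χ t ∈ Set.Icc (0 : ℝ) 1
  eq_one : ∀ t : ℝ, |t| ≤ 5 / 4 → χ t = 1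
  eq_zero : ∀ t : ℝ, 8 / 5 ≤ |t| → χ t = 0

/-- `x`-Fourier coefficient `â(η, ξ)` of a symbol. -/
def symCoeff (a : Sym d) (η : Zd d) (ξ : Vec d) : ℂ := fCoeff (fun x => a x ξ) η

/-- Midpoint `(j+k)/2` of two lattice points. -/
def mid (j k : Zd d) : Vec d := fun i => ((j i + k i : ℤ) : ℝ) / 2

/-- The paradifferential cut-off factor `χ_ε(|j-k|/⟨j+k⟩) = χ(|j-k|/(ε⟨j+k⟩))`. -/
def cutFactor (χ : ℝ → ℝ) (ε : ℝ) (j k : Zd d) : ℝ :=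
  χ (znorm (j - k) / (ε * jb (j + k)))

/-- The Weyl paradifferential operator `T_a`, acting on Fourier coefficient sequences:
`(T_a h)^(j) = (2π)^{-d/2} Σ_k χ_ε(|j-k|/⟨j+k⟩) â(j-k,(j+k)/2) ĥ(k)`. -/
def paraC (χ : ℝ → ℝ) (ε : ℝ) (a : Sym d) (c : Seq d) : Seq d := fun j =>
  (((2 * π : ℝ) ^ (-(d : ℝ) / 2) : ℝ) : ℂ) *
    ∑' k : Zd d, ((cutFactor χ ε j k : ℝ) : ℂ) * symCoeff a (j - k) (mid j k) * c k

/-- The operator `R_a` built from the difference of two cut-offs. -/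
def remC (χ : ℝ → ℝ) (ε₁ ε₂ : ℝ) (a : Sym d) (c : Seq d) : Seq d := fun j =>
  (((2 * π : ℝ) ^ (-(d : ℝ) / 2) : ℝ) : ℂ) *
    ∑' k : Zd d, ((cutFactor χ ε₁ j k - cutFactor χ ε₂ j k : ℝ) : ℂ) *
      symCoeff a (j - k) (mid j k) * c k

/-- Wirtinger derivative `∂_{y_j} = (∂_{Re y_j} - i ∂_{Im y_j})/2`. -/
def wdP {n : ℕ} (j : Fin n) (G : (Fin n → ℂ) → ℂ) : (Fin n → ℂ) → ℂ := fun y =>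
  (fderiv ℝ G y (Pi.single j 1) - Complex.I * fderiv ℝ G y (Pi.single j Complex.I)) / 2

/-- Wirtinger derivative `∂_{ȳ_j} = (∂_{Re y_j} + i ∂_{Im y_j})/2`. -/
def wdM {n : ℕ} (j : Fin n) (G : (Fin n → ℂ) → ℂ) : (Fin n → ℂ) → ℂ := fun y =>
  (fderiv ℝ G y (Pi.single j 1) + Complex.I * fderiv ℝ G y (Pi.single j Complex.I)) / 2

/-- The 1-jet `(u, ∇u)` of a function, as a point of `ℂ^{d+1}`. -/
def jet (u : Fn d) (x : Vec d) : Fin (d + 1) → ℂ :=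
  Fin.cons (u x) fun j => pdF j u x

/-- The Hamiltonian nonlinearity
`P(u) = (∂_{ū}F)(u,∇u) - Σ_j ∂_{x_j}((∂_{ū_{x_j}}F)(u,∇u))`. -/
def Pop (F : (Fin (d + 1) → ℂ) → ℂ) (u : Fn d) : Fn d := fun x =>
  wdM 0 F (jet u x) - ∑ j, pdF j (fun y => wdM (Fin.succ j) F (jet u y)) x

/-- `F ∈ C^∞(ℂ^{d+1};ℝ)` in the real sense, with a zero of order at least 3 at the origin. -/
def GoodF (d : ℕ) (F : (Fin (d + 1) → ℂ) → ℂ) : Prop :=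
  ContDiff ℝ (⊤ : ℕ∞) F ∧ (∀ y, (F y).im = 0) ∧ ∀ k : ℕ, k ≤ 2 → iteratedFDeriv ℝ k F 0 = 0

/-- Global ellipticity (Hypothesis 1.1). -/
def Elliptic (d : ℕ) (F : (Fin (d + 1) → ℂ) → ℂ) : Prop :=
  ∃ c₁ > (0 : ℝ), ∃ c₂ > (0 : ℝ), ∀ (ξ : Vec d) (y : Fin (d + 1) → ℂ),
    (c₁ * ∑ i, (ξ i) ^ 2 ≤
      (∑ j, ∑ k, ((ξ j * ξ k : ℝ) : ℂ) *
        ((if j = k then 1 else 0) + wdP (Fin.succ j) (wdM (Fin.succ k) F) y)).re) ∧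
    (ξ ≠ 0 → c₂ ≤
      (1 + (∑ j, ∑ k, ((ξ j * ξ k : ℝ) : ℂ) * wdP (Fin.succ j) (wdM (Fin.succ k) F) y).re
            / ∑ i, (ξ i) ^ 2) ^ 2
        - ‖∑ j, ∑ k, ((ξ j * ξ k : ℝ) : ℂ) * wdM (Fin.succ j) (wdM (Fin.succ k) F) y‖ ^ 2
            / (∑ i, (ξ i) ^ 2) ^ 2)

/-- The symbol `a₂(x,ξ) = Σ_{j,k} (∂_{ū_{x_k}}∂_{u_{x_j}}F)(u,∇u) ξ_j ξ_k`. -/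
def a2sym (F : (Fin (d + 1) → ℂ) → ℂ) (u : Fn d) : Sym d := fun x ξ =>
  ∑ j, ∑ k, ((ξ j * ξ k : ℝ) : ℂ) * wdP (Fin.succ j) (wdM (Fin.succ k) F) (jet u x)

/-- The symbol `b₂(x,ξ) = Σ_{j,k} (∂_{ū_{x_k}}∂_{ū_{x_j}}F)(u,∇u) ξ_j ξ_k`. -/
def b2sym (F : (Fin (d + 1) → ℂ) → ℂ) (u : Fn d) : Sym d := fun x ξ =>
  ∑ j, ∑ k, ((ξ j * ξ k : ℝ) : ℂ) * wdM (Fin.succ j) (wdM (Fin.succ k) F) (jet u x)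

/-- The symbol `a₁(x,ξ) = (i/2) Σ_j ((∂_{ū}∂_{u_{x_j}}F) - (∂_u∂_{ū_{x_j}}F))(u,∇u) ξ_j`. -/
def a1sym (F : (Fin (d + 1) → ℂ) → ℂ) (u : Fn d) : Sym d := fun x ξ =>
  Complex.I / 2 * ∑ j, ((ξ j : ℝ) : ℂ) *
    (wdM 0 (wdP (Fin.succ j) F) (jet u x) - wdP 0 (wdM (Fin.succ j) F) (jet u x))

/-- Conjugation of a coefficient sequence: the sequence of `conj u`. -/
def starSeq (c : Seq d) : Seq d := fun n => (starRingEnd ℂ) (c (-n))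

/-- Pointwise conjugate of a function. -/
def starF (u : Fn d) : Fn d := fun x => (starRingEnd ℂ) (u x)

/-- Pointwise conjugate of a symbol. -/
def starSym (a : Sym d) : Sym d := fun x ξ => (starRingEnd ℂ) (a x ξ)

/-- The symbol `(x,ξ) ↦ conj (a(x,-ξ))`. -/
def flipSym (a : Sym d) : Sym d := fun x ξ => (starRingEnd ℂ) (a x (-ξ))

/-- The matrix `E = diag(1,-1)` as a sign vector. -/
def Em : Fin 2 → ℂ := ![1, -1]

/-- `Op^BW` of a 2×2 matrix of symbols, acting on vectors of coefficient sequences. -/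
def opBWmat (χ : ℝ → ℝ) (ε : ℝ) (A : Fin 2 → Fin 2 → Sym d) (C : Fin 2 → Seq d) :
    Fin 2 → Seq d := fun σ j => ∑ τ, paraC χ ε (A σ τ) (C τ) j

/-- The symbol `|ξ|²`. -/
def sq2sym (d : ℕ) : Sym d := fun _ ξ => (((rnorm ξ) ^ 2 : ℝ) : ℂ)

/-- The matrix of symbols `A₂(x,ξ)`. -/
def A2mat (F : (Fin (d + 1) → ℂ) → ℂ) (u : Fn d) : Fin 2 → Fin 2 → Sym d :=
  ![![a2sym F u, b2sym F u], ![flipSym (b2sym F u), a2sym F u]]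

/-- The matrix of symbols `A₁(x,ξ)`. -/
def A1mat (F : (Fin (d + 1) → ℂ) → ℂ) (u : Fn d) : Fin 2 → Fin 2 → Sym d :=
  ![![a1sym F u, 0], ![0, flipSym (a1sym F u)]]

/-- The full matrix of symbols `|ξ|²𝟙 + A₂(x,ξ) + A₁(x,ξ)`. -/
def sysSym (F : (Fin (d + 1) → ℂ) → ℂ) (u : Fn d) : Fin 2 → Fin 2 → Sym d := fun σ τ =>
  fun x ξ => (if σ = τ then sq2sym d x ξ else 0) + A2mat F u σ τ x ξ + A1mat F u σ τ x ξ

/-- `H^s` norm of a vector of coefficient sequences. -/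
def hsNormVec (s : ℝ) (C : Fin 2 → Seq d) : ℝ := hsNorm s (C 0) + hsNorm s (C 1)

/-- Membership of a vector of coefficient sequences in `H^s`. -/
def InHsVec (s : ℝ) (C : Fin 2 → Seq d) : Prop := InHsSeq s (C 0) ∧ InHsSeq s (C 1)

/-- The `L²` pairing `(U,V) = ∫ (u v̄ + ū v)`, at the level of Fourier coefficients. -/
def pairL2 (C E : Fin 2 → Seq d) : ℂ :=
  ∑' n : Zd d, (C 0 n * (starRingEnd ℂ) (E 0 n) + C 1 n * (starRingEnd ℂ) (E 1 n))

/-- The scalar `L²` pairing, at the level of Fourier coefficients. -/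
def pairS (c e : Seq d) : ℂ := ∑' n : Zd d, c n * (starRingEnd ℂ) (e n)

/-- A matrix of operators is real-to-real: it preserves the subspace `𝒰 = {(u, ū)}`. -/
def PreservesReality (M : (Fin 2 → Seq d) → (Fin 2 → Seq d)) : Prop :=
  ∀ c : Seq d, M ![c, starSeq c] 1 = starSeq (M ![c, starSeq c] 0)

/-- The coefficient vector of `(v(t), conj v(t))`. -/
def Vvec (v : ℝ → Fn d) (t : ℝ) : Fin 2 → Seq d :=
  ![fCoeff (v t), starSeq (fCoeff (v t))]

/-- `V = (v, v̄)` solves `V̇ = iE Op^BW(|ξ|²𝟙 + A₂ + A₁)V` on `[0,T)`. -/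
def SolvesLin (χ : ℝ → ℝ) (ε : ℝ) (F : (Fin (d + 1) → ℂ) → ℂ) (T : ℝ)
    (u v : ℝ → Fn d) : Prop :=
  ∀ᵐ t ∂(volume.restrict (Set.Ico (0 : ℝ) T)), ∀ (σ : Fin 2) (n : Zd d),
    HasDerivAt (fun τ => Vvec v τ σ n)
      (Complex.I * Em σ * opBWmat χ ε (sysSym F (u t)) (Vvec v t) σ n) t

/-- The regularity hypothesis (4.1):
`u ∈ L^∞([0,T);H^s) ∩ Lip([0,T);H^{s-2})`, with
`sup_t ‖u(t)‖_{H^{2s₀+7}} ≤ r` and `‖∂_t u‖_{H^{2s₀+5}} ≤ r` (as a Lipschitz bound). -/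
def RegHyp (s₀ : ℕ) (s T r : ℝ) (u : ℝ → Fn d) : Prop :=
  (∀ t ∈ Set.Ico (0 : ℝ) T, InHs s (u t)) ∧
  (∃ M : ℝ, ∀ t ∈ Set.Ico (0 : ℝ) T, sobNorm s (u t) ≤ M) ∧
  (∃ L : ℝ, ∀ t₁ ∈ Set.Ico (0 : ℝ) T, ∀ t₂ ∈ Set.Ico (0 : ℝ) T,
    sobNorm (s - 2) (u t₁ - u t₂) ≤ L * |t₁ - t₂|) ∧
  (∀ t ∈ Set.Ico (0 : ℝ) T, sobNorm (2 * (s₀ : ℝ) + 7) (u t) ≤ r) ∧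
  (∀ t₁ ∈ Set.Ico (0 : ℝ) T, ∀ t₂ ∈ Set.Ico (0 : ℝ) T,
    sobNorm (2 * (s₀ : ℝ) + 5) (u t₁ - u t₂) ≤ r * |t₁ - t₂|)

/-- `v ∈ L^∞([0,T);H^s) ∩ Lip([0,T);H^{s-2})`. -/
def RegSol (s T : ℝ) (v : ℝ → Fn d) : Prop :=
  (∀ t ∈ Set.Ico (0 : ℝ) T, InHs s (v t)) ∧
  (∃ M : ℝ, ∀ t ∈ Set.Ico (0 : ℝ) T, sobNorm s (v t) ≤ M) ∧
  (∃ L : ℝ, ∀ t₁ ∈ Set.Ico (0 : ℝ) T, ∀ t₂ ∈ Set.Ico (0 : ℝ) T,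
    sobNorm (s - 2) (v t₁ - v t₂) ≤ L * |t₁ - t₂|)

/-- The high-frequency cut-off `𝒳_R(ξ) = 1 - χ(|ξ|/R)`. -/
def cutXR (χ : ℝ → ℝ) (R : ℝ) (ξ : Vec d) : ℝ := 1 - χ (rnorm ξ / R)

/-- `ã_{2,R}(x,ξ) = |ξ|^{-2} a₂(x,ξ) 𝒳_R(ξ)`. -/
def a2til (F : (Fin (d + 1) → ℂ) → ℂ) (u : Fn d) (χ : ℝ → ℝ) (R : ℝ) : Sym d := fun x ξ =>
  ((((rnorm ξ) ^ 2)⁻¹ * cutXR χ R ξ : ℝ) : ℂ) * a2sym F u x ξ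

/-- `b̃_{2,R}(x,ξ) = |ξ|^{-2} b₂(x,ξ) 𝒳_R(ξ)`. -/
def b2til (F : (Fin (d + 1) → ℂ) → ℂ) (u : Fn d) (χ : ℝ → ℝ) (R : ℝ) : Sym d := fun x ξ =>
  ((((rnorm ξ) ^ 2)⁻¹ * cutXR χ R ξ : ℝ) : ℂ) * b2sym F u x ξ

/-- `λ₂ = ((1+ã_{2,R})² - |b̃_{2,R}|²)^{1/2}`. -/
def lam2 (F : (Fin (d + 1) → ℂ) → ℂ) (u : Fn d) (χ : ℝ → ℝ) (R : ℝ) :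
    Vec d → Vec d → ℝ := fun x ξ =>
  Real.sqrt ((1 + (a2til F u χ R x ξ).re) ^ 2 - ‖b2til F u χ R x ξ‖ ^ 2)

/-- The normalizing denominator `(2λ₂(1+ã_{2,R}+λ₂))^{1/2}`. -/
def sden (F : (Fin (d + 1) → ℂ) → ℂ) (u : Fn d) (χ : ℝ → ℝ) (R : ℝ) :
    Vec d → Vec d → ℝ := fun x ξ =>
  Real.sqrt (2 * lam2 F u χ R x ξ * (1 + (a2til F u χ R x ξ).re + lam2 F u χ R x ξ))

/-- The symbol `s₁`. -/
def s1sym (F : (Fin (d + 1) → ℂ) → ℂ) (u : Fn d) (χ : ℝ → ℝ) (R : ℝ) : Sym d := fun x ξ =>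
  (((1 + (a2til F u χ R x ξ).re + lam2 F u χ R x ξ) / sden F u χ R x ξ : ℝ) : ℂ)

/-- The symbol `s₂`. -/
def s2sym (F : (Fin (d + 1) → ℂ) → ℂ) (u : Fn d) (χ : ℝ → ℝ) (R : ℝ) : Sym d := fun x ξ =>
  -b2til F u χ R x ξ / ((sden F u χ R x ξ : ℝ) : ℂ)

/-- `ã⁺_{2,R} = λ₂ - 1`. -/
def a2plus (F : (Fin (d + 1) → ℂ) → ℂ) (u : Fn d) (χ : ℝ → ℝ) (R : ℝ) : Sym d := fun x ξ =>
  ((lam2 F u χ R x ξ - 1 : ℝ) : ℂ)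

/-- The diagonalized second-order symbol `a₂^{(1)}(x,ξ) = |ξ|² ã⁺_{2,R}(x,ξ)`. -/
def a2one (F : (Fin (d + 1) → ℂ) → ℂ) (u : Fn d) (χ : ℝ → ℝ) (R : ℝ) : Sym d := fun x ξ =>
  (((rnorm ξ) ^ 2 * (lam2 F u χ R x ξ - 1) : ℝ) : ℂ)

/-- The real scalar symbol `ℒ(x,ξ) = |ξ|² + a₂^{(1)}(x,ξ)`. -/
def Lscal (F : (Fin (d + 1) → ℂ) → ℂ) (u : Fn d) (χ : ℝ → ℝ) (R : ℝ) :
    Vec d → Vec d → ℝ := fun x ξ =>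
  (rnorm ξ) ^ 2 + (rnorm ξ) ^ 2 * (lam2 F u χ R x ξ - 1)

/-- The matrix `S(x,ξ)`. -/
def Smat (F : (Fin (d + 1) → ℂ) → ℂ) (u : Fn d) (χ : ℝ → ℝ) (R : ℝ) (x ξ : Vec d) :
    Matrix (Fin 2) (Fin 2) ℂ :=
  !![s1sym F u χ R x ξ, s2sym F u χ R x ξ;
     (starRingEnd ℂ) (s2sym F u χ R x ξ), s1sym F u χ R x ξ]

/-- The matrix `S^{-1}(x,ξ)`. -/
def SmatInv (F : (Fin (d + 1) → ℂ) → ℂ) (u : Fn d) (χ : ℝ → ℝ) (R : ℝ) (x ξ : Vec d) :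
    Matrix (Fin 2) (Fin 2) ℂ :=
  !![s1sym F u χ R x ξ, -s2sym F u χ R x ξ;
     -(starRingEnd ℂ) (s2sym F u χ R x ξ), s1sym F u χ R x ξ]

/-- The matrix `Ã_{2,R}(x,ξ)`. -/
def A2tilMat (F : (Fin (d + 1) → ℂ) → ℂ) (u : Fn d) (χ : ℝ → ℝ) (R : ℝ) (x ξ : Vec d) :
    Matrix (Fin 2) (Fin 2) ℂ :=
  !![a2til F u χ R x ξ, b2til F u χ R x ξ;
     (starRingEnd ℂ) (b2til F u χ R x (-ξ)), a2til F u χ R x ξ]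

/-- The matrix `E = diag(1,-1)`. -/
def EmatM : Matrix (Fin 2) (Fin 2) ℂ := !![1, 0; 0, -1]

/-- The matrix of symbols `S^{-1}(x,ξ)`. -/
def SinvMatSym (F : (Fin (d + 1) → ℂ) → ℂ) (u : Fn d) (χ : ℝ → ℝ) (R : ℝ) :
    Fin 2 → Fin 2 → Sym d :=
  ![![s1sym F u χ R, fun x ξ => -s2sym F u χ R x ξ],
    ![fun x ξ => -(starRingEnd ℂ) (s2sym F u χ R x ξ), s1sym F u χ R]]

/-- The entry `s₁^{(1)}` of the matrix `S₁`. -/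
def s1_1 (F : (Fin (d + 1) → ℂ) → ℂ) (u : Fn d) (χ : ℝ → ℝ) (R : ℝ) : Sym d := fun x ξ =>
  1 / (2 * Complex.I) *
    (poisson (s2sym F u χ R) (starSym (s2sym F u χ R)) x ξ * s1sym F u χ R x ξ
      + 2 * poisson (s1sym F u χ R) (s2sym F u χ R) x ξ *
          (starRingEnd ℂ) (s2sym F u χ R x ξ))

/-- The entry `s₂^{(1)}` of the matrix `S₁`. -/
def s2_1 (F : (Fin (d + 1) → ℂ) → ℂ) (u : Fn d) (χ : ℝ → ℝ) (R : ℝ) : Sym d := fun x ξ =>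
  1 / (2 * Complex.I) *
    (poisson (s2sym F u χ R) (starSym (s2sym F u χ R)) x ξ * s2sym F u χ R x ξ
      + 2 * poisson (s1sym F u χ R) (s2sym F u χ R) x ξ * s1sym F u χ R x ξ)

/-- The matrix `S₁(x,ξ)`. -/
def S1mat (F : (Fin (d + 1) → ℂ) → ℂ) (u : Fn d) (χ : ℝ → ℝ) (R : ℝ) (x ξ : Vec d) :
    Matrix (Fin 2) (Fin 2) ℂ :=
  (1 / (2 * Complex.I)) •
    (!![poisson (s2sym F u χ R) (starSym (s2sym F u χ R)) x ξ,
          2 * poisson (s1sym F u χ R) (s2sym F u χ R) x ξ;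
        -2 * poisson (s1sym F u χ R) (starSym (s2sym F u χ R)) x (-ξ),
          poisson (s2sym F u χ R) (starSym (s2sym F u χ R)) x (-ξ)] *
      Smat F u χ R x ξ)

/-- The symbol `g₁`. -/
def g1sym (F : (Fin (d + 1) → ℂ) → ℂ) (u : Fn d) (χ : ℝ → ℝ) (R : ℝ) : Sym d := fun x ξ =>
  1 / (2 * Complex.I) * poisson (s1_1 F u χ R) (s1sym F u χ R) x ξ
    - 1 / (2 * Complex.I) * poisson (s2_1 F u χ R) (starSym (s2sym F u χ R)) x ξ
    + 1 / 8 * sigmaB (s2sym F u χ R) (starSym (s2sym F u χ R)) x ξ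

/-- The symbol `g₂`. -/
def g2sym (F : (Fin (d + 1) → ℂ) → ℂ) (u : Fn d) (χ : ℝ → ℝ) (R : ℝ) : Sym d := fun x ξ =>
  -(1 / (2 * Complex.I)) * poisson (s1_1 F u χ R) (s2sym F u χ R) x ξ
    + 1 / (2 * Complex.I) * poisson (s2_1 F u χ R) (s1sym F u χ R) x ξ

/-- The derivative operator `∂_{x_i}` at the level of Fourier coefficients. -/
def dOp (i : Fin d) (c : Seq d) : Seq d := fun n => Complex.I * ((n i : ℝ) : ℂ) * c n

/-- A positive constant depending monotonically on a size parameter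
(hence bounded from above as the parameter goes to zero). -/
def GoodConst (C : ℝ → ℝ) : Prop := Monotone C ∧ ∀ x : ℝ, 0 < C x


lemma znorm_eq (n : Zd d) : znorm n = ‖(WithLp.toLp 2 (fun i => (n i : ℝ)) : EuclideanSpace ℝ (Fin d))‖ := by
  simp [znorm, EuclideanSpace.norm_eq]

lemma znorm_nonneg (n : Zd d) : 0 ≤ znorm n := Real.sqrt_nonneg _

lemma znorm_add_le (v w : Zd d) : znorm (v + w) ≤ znorm v + znorm w := by
  rw [znorm_eq, znorm_eq, znorm_eq]
  refine le_trans (le_of_eq ?_) (norm_add_le _ _)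
  congr 1
  ext i
  simp

lemma znorm_neg (v : Zd d) : znorm (-v) = znorm v := by
  simp [znorm]

lemma one_le_jb (n : Zd d) : 1 ≤ jb n := by
  unfold jb
  rw [Real.one_le_sqrt]
  have : 0 ≤ ∑ i, ((n i : ℝ)) ^ 2 := Finset.sum_nonneg fun i _ => sq_nonneg _
  linarith

lemma jb_pos (n : Zd d) : 0 < jb n := lt_of_lt_of_le one_pos (one_le_jb n)

lemma znorm_le_jb (n : Zd d) : znorm n ≤ jb n := Real.sqrt_le_sqrt (by linarith)

lemma jb_le (n : Zd d) : jb n ≤ 1 + znorm n := by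
  have h : 0 ≤ ∑ i, ((n i : ℝ)) ^ 2 := Finset.sum_nonneg fun i _ => sq_nonneg _
  unfold jb
  rw [Real.sqrt_le_left (by linarith [znorm_nonneg n])]
  have := Real.sq_sqrt h
  have h2 := znorm_nonneg n
  unfold znorm at *
  nlinarith

/-- kernel -/
def aK (χ : ℝ → ℝ) (ε : ℝ) (v w : Zd d) : ℂ :=
  ((1 - cutFactor χ ε (v + w) w - cutFactor χ ε (v + w) v : ℝ) : ℂ)

lemma aK_symm (χ : ℝ → ℝ) (ε : ℝ) (v w : Zd d) : aK χ ε v w = aK χ ε w v := by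
  unfold aK
  rw [add_comm v w]
  congr 1
  ring

lemma aK_norm {χ : ℝ → ℝ} (hχ : IsCutoff χ) (ε : ℝ) (v w : Zd d) : ‖aK χ ε v w‖ ≤ 1 := by
  unfold aK
  rw [Complex.norm_real, Real.norm_eq_abs, abs_le]
  obtain ⟨h1, h2⟩ := hχ.mem (znorm (v + w - w) / (ε * jb (v + w + w)))
  obtain ⟨h3, h4⟩ := hχ.mem (znorm (v + w - v) / (ε * jb (v + w + v)))
  unfold cutFactor
  constructor <;> linarith

lemma aK_zero {χ : ℝ → ℝ} (hχ : IsCutoff χ) {ε : ℝ} (hε₀ : 0 < ε) (hε₁ : ε < 1 / 4)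
    (v w : Zd d) (h : (1 + 4 / ε) * (1 + znorm v) < 1 + znorm w) : aK χ ε v w = 0 := by
  have hv := znorm_nonneg v
  have hw := znorm_nonneg w
  have h4 : 16 ≤ 4 / ε := by rw [le_div_iff₀ hε₀]; linarith
  have hA : 4 / ε * (1 + znorm v) ≤ znorm w := by nlinarith
  have hB : 16 * (1 + znorm v) ≤ znorm w := by nlinarith
  have hC : 4 * (1 + znorm v) ≤ ε * znorm w := by
    have := mul_le_mul_of_nonneg_left hA hε₀.le
    rw [← mul_assoc, mul_div_cancel₀ _ hε₀.ne'] at this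
    exact this
  have e1 : cutFactor χ ε (v + w) w = 1 := by
    apply hχ.eq_one
    rw [add_sub_cancel_right]
    have hj : znorm w ≤ jb (v + w + w) := by
      have h1 := znorm_le_jb (v + w + w)
      have h2 := znorm_add_le (v + w + w) (-v)
      have h3 := znorm_add_le (w + w) (-w)
      have h5 : znorm (w + w) = 2 * znorm w := by
        have : ∀ n : Zd d, znorm (n + n) = 2 * znorm n := by
          intro n
          rw [znorm_eq, znorm_eq]
          have : (WithLp.toLp 2 (fun i => ((n + n) i : ℝ)) : EuclideanSpace ℝ (Fin d)) =
            (2 : ℝ) • WithLp.toLp 2 (fun i => (n i : ℝ)) := by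
            ext i; simp; ring
          rw [this, norm_smul]; simp
        exact this w
      have h6 : v + w + w + -v = w + w := by abel
      rw [h6, znorm_neg, h5] at h2
      linarith
    have hp := jb_pos (v + w + w)
    rw [abs_of_nonneg (by positivity), div_le_iff₀ (by positivity)]
    have := mul_le_mul_of_nonneg_left hj hε₀.le
    nlinarith
  have e2 : cutFactor χ ε (v + w) v = 0 := by
    apply hχ.eq_zero
    rw [add_sub_cancel_left]
    have hj : jb (v + w + v) ≤ 1 + znorm w + 2 * znorm v := by
      have h1 := jb_le (v + w + v)
      have h2 := znorm_add_le (v + w) v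
      have h3 := znorm_add_le v w
      linarith
    have hp := jb_pos (v + w + v)
    rw [abs_of_nonneg (by positivity), le_div_iff₀ (by positivity)]
    have : ε * jb (v + w + v) ≤ 1 / 4 * jb (v + w + v) := by gcongr
    linarith
  simp [aK, e1, e2]

lemma aK_ne {χ : ℝ → ℝ} (hχ : IsCutoff χ) {ε : ℝ} (hε₀ : 0 < ε) (hε₁ : ε < 1 / 4)
    (v w : Zd d) (h : aK χ ε v w ≠ 0) : 1 + znorm w ≤ (1 + 4 / ε) * (1 + znorm v) := by
  by_contra hc
  exact h (aK_zero hχ hε₀ hε₁ v w (not_le.mp hc))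

lemma aK_decay {χ : ℝ → ℝ} (hχ : IsCutoff χ) {ε : ℝ} (hε₀ : 0 < ε) (hε₁ : ε < 1 / 4)
    (ρ : ℝ) (hρ : 0 ≤ ρ) (v w : Zd d) :
    ‖aK χ ε v w‖ ≤ (1 + 4 / ε) ^ ρ * (1 + min (znorm v) (znorm w)) ^ ρ
            / (1 + max (znorm v) (znorm w)) ^ ρ := by
  have hv := znorm_nonneg v
  have hw := znorm_nonneg w
  have hmin : 0 ≤ min (znorm v) (znorm w) := le_min hv hw
  have hmax : 0 ≤ max (znorm v) (znorm w) := le_max_of_le_left hv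
  by_cases h : aK χ ε v w = 0
  · rw [h, norm_zero]; positivity
  have h1 := aK_ne hχ hε₀ hε₁ v w h
  have h2 := aK_ne hχ hε₀ hε₁ w v (by rwa [aK_symm])
  refine (aK_norm hχ ε v w).trans ?_
  rw [le_div_iff₀ (by positivity), one_mul, ← Real.mul_rpow (by positivity) (by positivity)]
  apply Real.rpow_le_rpow (by positivity) _ hρ
  rcases le_total (znorm v) (znorm w) with hh | hh
  · rw [max_eq_right hh, min_eq_left hh]; exact h1
  · rw [max_eq_left hh, min_eq_right hh]; exact h2

lemma aK_mult {χ : ℝ → ℝ} (hχ : IsCutoff χ) {ε : ℝ} (hε₀ : 0 < ε) (hε₁ : ε < 1 / 4)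
    (s s₀ ρ : ℝ) (hs : 0 ≤ s) (hρ : 0 ≤ ρ) (hρs : ρ ≤ s - s₀) (v w : Zd d) :
    jb (v + w) ^ (s + ρ) * ‖aK χ ε v w‖ ≤
      (2 * (2 + 4 / ε)) ^ (s + ρ) * (jb v ^ s * (jb w ^ s * jb w ^ (-s₀))) := by
  have hv := znorm_nonneg v
  have hw := znorm_nonneg w
  have pv := jb_pos v
  have pw := jb_pos w
  have pvw := jb_pos (v + w)
  have hN : 0 < 2 * (2 + 4 / ε) := by positivity
  by_cases h : aK χ ε v w = 0
  · rw [h, norm_zero, mul_zero]; positivity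
  have h1 := aK_ne hχ hε₀ hε₁ v w h
  have h2 := aK_ne hχ hε₀ hε₁ w v (by rwa [aK_symm])
  have h3 := jb_le (v + w)
  have h4 := znorm_add_le v w
  have b1 := one_le_jb v
  have b2 := one_le_jb w
  have c1 := znorm_le_jb v
  have c2 := znorm_le_jb w
  have hq : 0 < 4 / ε := by positivity
  have d1 : jb (v + w) ≤ (2 * (2 + 4 / ε)) * jb v := by
    calc jb (v + w) ≤ (2 + 4 / ε) * (1 + znorm v) := by nlinarith
      _ ≤ (2 + 4 / ε) * (2 * jb v) := by gcongr; linarith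
      _ = _ := by ring
  have d2 : jb (v + w) ≤ (2 * (2 + 4 / ε)) * jb w := by
    calc jb (v + w) ≤ (2 + 4 / ε) * (1 + znorm w) := by nlinarith
      _ ≤ (2 + 4 / ε) * (2 * jb w) := by gcongr; linarith
      _ = _ := by ring
  calc jb (v + w) ^ (s + ρ) * ‖aK χ ε v w‖ ≤ jb (v + w) ^ (s + ρ) * 1 := by
        gcongr; exact aK_norm hχ ε v w
    _ = jb (v + w) ^ s * jb (v + w) ^ ρ := by rw [mul_one, Real.rpow_add pvw]
    _ ≤ ((2 * (2 + 4 / ε)) * jb v) ^ s * ((2 * (2 + 4 / ε)) * jb w) ^ ρ := by gcongr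
    _ = (2 * (2 + 4 / ε)) ^ (s + ρ) * (jb v ^ s * jb w ^ ρ) := by
        rw [Real.mul_rpow hN.le pv.le, Real.mul_rpow hN.le pw.le, Real.rpow_add hN]; ring
    _ ≤ _ := by
        rw [← Real.rpow_add pw]
        gcongr
        linarith

lemma jb_summable (s₀ : ℝ) (hs₀ : (d : ℝ) / 2 < s₀) :
    Summable fun n : Zd d => jb n ^ (-(2 * s₀)) := by
  let L := Submodule.span ℤ (Set.range (Pi.basisFun ℝ (Fin d)))
  have hfr : Module.finrank ℤ L = d := by
    rw [ZLattice.rank ℝ L]; simp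
  have h := ZLattice.summable_norm_rpow L (-(2 * s₀)) (by rw [hfr]; linarith)
  let φ : Zd d → L := fun n => ⟨fun i => (n i : ℝ), by
    have : (fun i => (n i : ℝ)) = ∑ i, n i • (Pi.basisFun ℝ (Fin d)) i := by
      ext j; simp [Finset.sum_apply, Pi.single_apply]
    rw [this]
    exact Submodule.sum_mem _ fun i _ => Submodule.smul_mem _ _ (Submodule.subset_span ⟨i, rfl⟩)⟩
  have hφ : Function.Injective φ := by
    intro a b hab
    have := congrArg Subtype.val hab
    ext i
    have := congrFun this i
    simpa [φ] using this
  have h1 := h.comp_injective hφ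
  have h2 : Summable fun n : Zd d => if n = 0 then (1 : ℝ) else 0 :=
    (hasSum_ite_eq (0 : Zd d) (1 : ℝ)).summable
  have h3 := h1.add h2
  refine Summable.of_nonneg_of_le (fun n => (Real.rpow_pos_of_pos (jb_pos n) _).le) (fun n => ?_) h3
  by_cases hn : n = 0
  · subst hn
    have : (0 : ℝ) ≤ ‖φ 0‖ ^ (-(2 * s₀)) := by positivity
    have h4 : jb (0 : Zd d) = 1 := by simp [jb]
    simp [h4]
    simpa using this
  · have hpos : 0 < ‖φ n‖ := by
      rw [norm_pos_iff]
      intro h0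
      apply hn
      apply hφ
      rw [h0]
      ext i; simp [φ]
    have hle : ‖φ n‖ ≤ jb n := by
      change ‖(fun i => (n i : ℝ))‖ ≤ _
      rw [pi_norm_le_iff_of_nonneg (jb_pos n).le]
      intro i
      unfold jb
      apply Real.le_sqrt_of_sq_le
      have := Finset.single_le_sum (f := fun i => ((n i : ℝ)) ^ 2) (fun i _ => sq_nonneg _) (Finset.mem_univ i)
      simp only [Real.norm_eq_abs, sq_abs]
      linarith
    simp only [Function.comp, hn, if_false, add_zero]
    have : (0 : ℝ) ≤ d := Nat.cast_nonneg d
    exact Real.rpow_le_rpow_of_nonpos hpos hle (by linarith)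

lemma sq_split (s : ℝ) (n : Zd d) (x : ℝ) : (jb n ^ s * x) ^ 2 = jb n ^ (2 * s) * x ^ 2 := by
  rw [mul_pow, ← Real.rpow_natCast (jb n ^ s), ← Real.rpow_mul (jb_pos n).le]
  congr 2
  push_cast; ring

lemma l1_of_Hs (s s₀ : ℝ) (hs₀ : (d : ℝ) / 2 < s₀) (hs : s₀ ≤ s) (c : Seq d) (hc : InHsSeq s c) :
    Summable fun n => ‖c n‖ := by
  have h1 := jb_summable s (d := d) (by linarith)
  refine Summable.of_nonneg_of_le (fun n => norm_nonneg _) (fun n => ?_) (hc.add h1)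
  have h2 : (jb n ^ (-s) * 1) ^ 2 = _ := sq_split (-s) n 1
  have h3 := sq_split s n ‖c n‖
  have h4 : jb n ^ (-s) * jb n ^ s = 1 := by
    rw [← Real.rpow_add (jb_pos n)]; simp
  have e : 2 * -s = -(2 * s) := by ring
  rw [e, one_pow, mul_one, mul_one] at h2
  rw [← h2, ← h3]
  have h5 := norm_nonneg (c n)
  have : ‖c n‖ = (jb n ^ s * ‖c n‖) * jb n ^ (-s) := by
    rw [mul_right_comm, mul_comm (jb n ^ s), h4, one_mul]
  nlinarith [sq_nonneg (jb n ^ s * ‖c n‖ - jb n ^ (-s)), sq_nonneg (jb n ^ s * ‖c n‖), sq_nonneg (jb n ^ (-s))]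

lemma cont_of_Hs (s s₀ : ℝ) (hs₀ : (d : ℝ) / 2 < s₀) (hs : s₀ ≤ s) (f : Fn d) (hf : InHs s f) :
    Continuous f := by
  have h1 := l1_of_Hs s s₀ hs₀ hs _ hf.2.1
  have : f = fun x => ∑' n : Zd d, (((2 * π : ℝ) ^ (-(d : ℝ) / 2) : ℝ) : ℂ) * fCoeff f n *
        Complex.exp (Complex.I * ((∑ i, (n i : ℝ) * x i : ℝ) : ℂ)) := by
    ext x; exact (hf.2.2 x).tsum_eq.symm
  rw [this]
  refine continuous_tsum (u := fun n => ‖(((2 * π : ℝ) ^ (-(d : ℝ) / 2) : ℝ) : ℂ)‖ * ‖fCoeff f n‖) (fun n => by fun_prop) (h1.mul_left _) ?_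
  intro n x
  rw [norm_mul, norm_mul, mul_comm Complex.I, Complex.norm_exp_ofReal_mul_I, mul_one]

lemma box_int (f : Fn d) (hf : Continuous f) : IntegrableOn f (box d) := by
  have h1 : IsCompact (Set.univ.pi fun _ : Fin d => Set.Icc (0 : ℝ) (2 * π)) :=
    isCompact_univ_pi fun _ => isCompact_Icc
  exact (hf.continuousOn.integrableOn_compact h1).mono_set
    (Set.pi_mono fun _ _ => Set.Ioc_subset_Icc_self)

lemma exp_split (ξ η : Zd d) (x : Vec d) :
    Complex.exp (Complex.I * ((∑ i, (η i : ℝ) * x i : ℝ) : ℂ)) *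
    Complex.exp (-Complex.I * ((∑ i, (ξ i : ℝ) * x i : ℝ) : ℂ)) =
    Complex.exp (-Complex.I * ((∑ i, ((ξ - η) i : ℝ) * x i : ℝ) : ℂ)) := by
  rw [← Complex.exp_add]
  congr 1
  have : (∑ i, ((ξ - η) i : ℝ) * x i) = (∑ i, (ξ i : ℝ) * x i) - ∑ i, (η i : ℝ) * x i := by
    rw [← Finset.sum_sub_distrib]
    refine Finset.sum_congr rfl fun i _ => ?_
    simp; ring
  rw [this]
  push_cast; ring

lemma fCoeff_mul (s s₀ : ℝ) (hs₀ : (d : ℝ) / 2 < s₀) (hs : s₀ ≤ s) (f g : Fn d)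
    (hf : InHs s f) (hg : InHs s g) (ξ : Zd d) :
    fCoeff (fun x => f x * g x) ξ = (((2 * π : ℝ) ^ (-(d : ℝ) / 2) : ℝ) : ℂ) *
      ∑' η : Zd d, fCoeff f (ξ - η) * fCoeff g η := by
  have hfc := cont_of_Hs s s₀ hs₀ hs f hf
  have hg1 := l1_of_Hs s s₀ hs₀ hs _ hg.2.1
  set κ : ℂ := (((2 * π : ℝ) ^ (-(d : ℝ) / 2) : ℝ) : ℂ) with hκ
  let F : Zd d → Vec d → ℂ := fun η x => (κ * fCoeff g η) *
    (f x * Complex.exp (-Complex.I * ((∑ i, ((ξ - η) i : ℝ) * x i : ℝ) : ℂ)))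
  have hFi : ∀ η, Integrable (F η) (volume.restrict (box d)) := by
    intro η
    exact box_int (F η) (continuous_const.mul (hfc.mul (by fun_prop)))
  have hFn : ∀ η x, ‖F η x‖ = ‖κ‖ * ‖fCoeff g η‖ * ‖f x‖ := by
    intro η x
    simp only [F]
    rw [norm_mul, norm_mul, norm_mul, neg_mul, ← mul_neg, ← Complex.ofReal_neg, mul_comm Complex.I,
      Complex.norm_exp_ofReal_mul_I, mul_one]
  have hS : Summable fun η => ∫ x in box d, ‖F η x‖ := by
    simp_rw [hFn, integral_const_mul]
    exact (hg1.mul_left _).mul_right _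
  have key := hasSum_integral_of_summable_integral_norm hFi hS
  have e1 : ∀ x, ∑' η, F η x = f x * g x * Complex.exp (-Complex.I * ((∑ i, (ξ i : ℝ) * x i : ℝ) : ℂ)) := by
    intro x
    have h := (((hg.2.2 x).mul_left (f x)).mul_right
      (Complex.exp (-Complex.I * ((∑ i, (ξ i : ℝ) * x i : ℝ) : ℂ)))).tsum_eq
    rw [← h]
    refine tsum_congr fun η => ?_
    simp only [F]
    rw [← exp_split ξ η x]
    ring
  simp_rw [e1] at key
  have hdef : ∀ (u : Fn d) (n : Zd d), fCoeff u n = κ * ∫ x in box d, u x *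
    Complex.exp (-Complex.I * ((∑ i, (n i : ℝ) * x i : ℝ) : ℂ)) := fun _ _ => rfl
  rw [hdef (fun x => f x * g x), ← key.tsum_eq]
  congr 1
  refine tsum_congr fun η => ?_
  simp only [F]
  rw [integral_const_mul, hdef f]
  ring

lemma summ_conv (c e : Seq d) (hc : Summable fun n => ‖c n‖) (he : Summable fun n => ‖e n‖)
    (b : Zd d → ℂ) (hb : ∀ n, ‖b n‖ ≤ 1) (ξ : Zd d) :
    Summable fun η => b η * c (ξ - η) * e η := by
  have h0 : ∀ n, ‖c n‖ ≤ ∑' n, ‖c n‖ := fun n => hc.le_tsum n fun _ _ => norm_nonneg _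
  refine Summable.of_norm_bounded (he.mul_left (∑' n, ‖c n‖)) fun η => ?_
  rw [norm_mul, norm_mul]
  gcongr
  calc ‖b η‖ * ‖c (ξ - η)‖ ≤ 1 * ‖c (ξ - η)‖ := by gcongr; exact hb η
    _ ≤ _ := by rw [one_mul]; exact h0 _

lemma rem_formula {χ : ℝ → ℝ} (hχ : IsCutoff χ) (ε : ℝ)
    (s s₀ : ℝ) (hs₀ : (d : ℝ) / 2 < s₀) (hs : s₀ ≤ s) (f g : Fn d)
    (hf : InHs s f) (hg : InHs s g) (ξ : Zd d) :
    fCoeff (fun x => f x * g x) ξ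
            - paraC χ ε (fun x _ => f x) (fCoeff g) ξ
            - paraC χ ε (fun x _ => g x) (fCoeff f) ξ
          = (((2 * π : ℝ) ^ (-(d : ℝ) / 2) : ℝ) : ℂ) *
              ∑' η : Zd d, aK χ ε (ξ - η) η * fCoeff f (ξ - η) * fCoeff g η := by
  have hf1 := l1_of_Hs s s₀ hs₀ hs _ hf.2.1
  have hg1 := l1_of_Hs s s₀ hs₀ hs _ hg.2.1
  have hcut : ∀ j k : Zd d, ‖((cutFactor χ ε j k : ℝ) : ℂ)‖ ≤ 1 := by
    intro j k
    obtain ⟨h1, h2⟩ := hχ.mem (znorm (j - k) / (ε * jb (j + k)))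
    rw [Complex.norm_real, Real.norm_eq_abs, abs_le]
    unfold cutFactor
    constructor <;> linarith
  have S1 := summ_conv _ _ hf1 hg1 (fun _ => 1) (by simp) ξ
  have S2 := summ_conv _ _ hf1 hg1 (fun η => ((cutFactor χ ε ξ η : ℝ) : ℂ)) (fun η => hcut _ _) ξ
  have S3 := summ_conv _ _ hf1 hg1 (fun η => ((cutFactor χ ε ξ (ξ - η) : ℝ) : ℂ)) (fun η => hcut _ _) ξ
  have E3 : ∑' k : Zd d, ((cutFactor χ ε ξ k : ℝ) : ℂ) * fCoeff g (ξ - k) * fCoeff f k =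
      ∑' η, ((cutFactor χ ε ξ (ξ - η) : ℝ) : ℂ) * fCoeff f (ξ - η) * fCoeff g η := by
    rw [← (Equiv.subLeft ξ).tsum_eq]
    refine tsum_congr fun η => ?_
    simp only [Equiv.subLeft_apply, sub_sub_cancel]
    ring
  rw [fCoeff_mul s s₀ hs₀ hs f g hf hg]
  unfold paraC symCoeff
  rw [E3, ← mul_sub, ← mul_sub]
  congr 1
  simp only [one_mul] at S1
  rw [← S1.tsum_sub S2, ← (S1.sub S2).tsum_sub S3]
  refine tsum_congr fun η => ?_
  unfold aK
  rw [sub_add_cancel]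
  push_cast
  ring

lemma conv_bound (A B D : Zd d → ℝ) (hA : ∀ n, 0 ≤ A n) (hB : ∀ n, 0 ≤ B n) (hD : ∀ n, 0 ≤ D n)
    (sA : Summable fun n => A n ^ 2) (sB : Summable fun n => B n ^ 2)
    (sD : Summable fun n => D n ^ 2) (c : Zd d → ℝ) (hc0 : ∀ n, 0 ≤ c n)
    (hc : ∀ ξ, c ξ ≤ ∑' η, A (ξ - η) * (B η * D η)) :
    ∑' ξ, c ξ ^ 2 ≤ (∑' n, D n ^ 2) * ((∑' n, A n ^ 2) * ∑' n, B n ^ 2) := by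
  have P : Summable fun p : Zd d × Zd d => A p.1 ^ 2 * B p.2 ^ 2 :=
    sA.mul_of_nonneg sB (fun n => sq_nonneg _) (fun n => sq_nonneg _)
  let e : Zd d × Zd d ≃ Zd d × Zd d :=
    { toFun := fun p => (p.1 - p.2, p.2)
      invFun := fun p => (p.1 + p.2, p.2)
      left_inv := fun p => by simp
      right_inv := fun p => by simp }
  have Q : Summable fun p : Zd d × Zd d => A (p.1 - p.2) ^ 2 * B p.2 ^ 2 := e.summable_iff.mpr P
  have T : ∑' ξ, ∑' η, A (ξ - η) ^ 2 * B η ^ 2 = (∑' n, A n ^ 2) * ∑' n, B n ^ 2 := by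
    rw [sA.tsum_mul_tsum sB P, ← e.tsum_eq, ← Q.tsum_prod]
    rfl
  have hpt : ∀ ξ, c ξ ^ 2 ≤ (∑' n, D n ^ 2) * ∑' η, A (ξ - η) ^ 2 * B η ^ 2 := by
    intro ξ
    have q := Q.prod_factor ξ
    have hh : Real.HolderConjugate 2 2 := Real.HolderConjugate.two_two
    have := Real.inner_le_Lp_mul_Lq_tsum_of_nonneg hh (f := fun η => A (ξ - η) * B η) (g := D)
      (fun η => mul_nonneg (hA _) (hB _)) hD (by simpa [mul_pow] using q) (by simpa using sD)
    simp only [Real.rpow_two, mul_pow, ← Real.sqrt_eq_rpow, mul_assoc] at this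
    have h2 := (hc ξ).trans this
    have h3 := pow_le_pow_left₀ (hc0 ξ) h2 2
    rw [mul_pow, Real.sq_sqrt (tsum_nonneg fun _ => by positivity),
      Real.sq_sqrt (tsum_nonneg fun _ => by positivity)] at h3
    rwa [mul_comm]
  have SS : Summable fun ξ => (∑' n, D n ^ 2) * ∑' η, A (ξ - η) ^ 2 * B η ^ 2 := Q.prod.mul_left _
  have := (SS.of_nonneg_of_le (fun ξ => sq_nonneg _) hpt).tsum_le_tsum hpt SS
  rwa [tsum_mul_left, T] at this

lemma rem_bound {χ : ℝ → ℝ} (hχ : IsCutoff χ) {ε : ℝ} (hε₀ : 0 < ε) (hε₁ : ε < 1 / 4)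
    (s s₀ ρ : ℝ) (hs₀ : (d : ℝ) / 2 < s₀) (hs : s₀ ≤ s) (hρ : 0 ≤ ρ) (hρs : ρ ≤ s - s₀) :
    ∃ C > (0 : ℝ), ∀ c e : Seq d, InHsSeq s c → InHsSeq s e →
      hsNorm (s + ρ) (fun ξ => (((2 * π : ℝ) ^ (-(d : ℝ) / 2) : ℝ) : ℂ) *
              ∑' η : Zd d, aK χ ε (ξ - η) η * c (ξ - η) * e η) ≤ C * hsNorm s c * hsNorm s e := by
  have hd0 : (0 : ℝ) ≤ d := Nat.cast_nonneg d
  have hs00 : 0 ≤ s := by linarith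
  set κ : ℂ := (((2 * π : ℝ) ^ (-(d : ℝ) / 2) : ℝ) : ℂ) with hκ
  set N : ℝ := ‖κ‖ * (2 * (2 + 4 / ε)) ^ (s + ρ) with hN
  have hN0 : 0 ≤ N := by positivity
  have hDs := jb_summable (d := d) s₀ hs₀
  have hDeq : ∀ n : Zd d, (jb n ^ (-s₀)) ^ 2 = jb n ^ (-(2 * s₀)) := by
    intro n
    have := sq_split (-s₀) n 1
    rw [mul_one, one_pow, mul_one] at this
    rw [this]; congr 1; ring
  set K : ℝ := ∑' n : Zd d, jb n ^ (-(2 * s₀)) with hK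
  have hK0 : 0 ≤ K := tsum_nonneg fun n => (Real.rpow_pos_of_pos (jb_pos n) _).le
  refine ⟨N * √K + 1, by positivity, fun c e hc he => ?_⟩
  have hc1 := l1_of_Hs s s₀ hs₀ hs _ hc
  have he1 := l1_of_Hs s s₀ hs₀ hs _ he
  have nn : ∀ (n : Zd d) (r : ℝ), 0 ≤ jb n ^ r := fun n r => (Real.rpow_pos_of_pos (jb_pos n) _).le
  have main := conv_bound (fun n => N * (jb n ^ s * ‖c n‖)) (fun n => jb n ^ s * ‖e n‖)
    (fun n => jb n ^ (-s₀)) (fun n => mul_nonneg hN0 (mul_nonneg (nn _ _) (norm_nonneg _)))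
    (fun n => mul_nonneg (nn _ _) (norm_nonneg _)) (fun n => nn _ _)
    (by simp_rw [mul_pow N, sq_split]; exact hc.mul_left _) (by simp_rw [sq_split]; exact he)
    (by simp_rw [hDeq]; exact hDs)
    (fun ξ => jb ξ ^ (s + ρ) * ‖κ * ∑' η : Zd d, aK χ ε (ξ - η) η * c (ξ - η) * e η‖)
    (fun ξ => mul_nonneg (nn _ _) (norm_nonneg _)) ?_
  · simp_rw [mul_pow N, sq_split, hDeq] at main
    rw [tsum_mul_left, ← hK] at main
    unfold hsNorm
    have h1 : hsNormSq (s + ρ) (fun ξ => κ * ∑' η : Zd d, aK χ ε (ξ - η) η * c (ξ - η) * e η) ≤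
       (N * √K * √(hsNormSq s c) * √(hsNormSq s e)) ^ 2 := by
      have n1 : 0 ≤ hsNormSq s c := tsum_nonneg fun n => mul_nonneg (nn _ _) (sq_nonneg _)
      have n2 : 0 ≤ hsNormSq s e := tsum_nonneg fun n => mul_nonneg (nn _ _) (sq_nonneg _)
      rw [mul_pow, mul_pow, mul_pow, Real.sq_sqrt hK0, Real.sq_sqrt n1, Real.sq_sqrt n2]
      refine le_trans main (le_of_eq ?_)
      unfold hsNormSq
      ring
    refine (Real.sqrt_le_sqrt h1).trans ?_
    rw [Real.sqrt_sq (by positivity)]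
    gcongr
    linarith
  · intro ξ
    have hcS : ∀ η, jb ξ ^ (s + ρ) * (‖κ‖ * ‖aK χ ε (ξ - η) η * c (ξ - η) * e η‖) ≤
        N * (jb (ξ - η) ^ s * ‖c (ξ - η)‖) * (jb η ^ s * ‖e η‖ * jb η ^ (-s₀)) := by
      intro η
      have h := aK_mult hχ hε₀ hε₁ s s₀ ρ hs00 hρ hρs (ξ - η) η
      rw [sub_add_cancel] at h
      rw [norm_mul, norm_mul]
      calc _ = (jb ξ ^ (s + ρ) * ‖aK χ ε (ξ - η) η‖) * (‖κ‖ * ‖c (ξ - η)‖ * ‖e η‖) := by ring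
        _ ≤ ((2 * (2 + 4 / ε)) ^ (s + ρ) * (jb (ξ - η) ^ s * (jb η ^ s * jb η ^ (-s₀)))) *
            (‖κ‖ * ‖c (ξ - η)‖ * ‖e η‖) := mul_le_mul_of_nonneg_right h (by positivity)
        _ = _ := by rw [hN]; ring
    have sm : Summable fun η => ‖aK χ ε (ξ - η) η * c (ξ - η) * e η‖ :=
      (summ_conv c e hc1 he1 (fun η => aK χ ε (ξ - η) η) (fun η => aK_norm hχ ε _ _) ξ).norm
    have smR : Summable fun η => N * (jb (ξ - η) ^ s * ‖c (ξ - η)‖) * (jb η ^ s * ‖e η‖ * jb η ^ (-s₀)) := by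
      have b : ∀ n, (jb n ^ s * ‖c n‖) ^ 2 ≤ hsNormSq s c := by
        intro n
        rw [sq_split]
        exact hc.le_tsum n fun _ _ => mul_nonneg (nn _ _) (sq_nonneg _)
      have t : Summable fun η => (jb η ^ s * ‖e η‖ * jb η ^ (-s₀)) := by
        refine Summable.of_nonneg_of_le
          (fun n => mul_nonneg (mul_nonneg (nn _ _) (norm_nonneg _)) (nn _ _)) (fun n => ?_) (he.add hDs)
        rw [← sq_split, ← hDeq]
        nlinarith [sq_nonneg (jb n ^ s * ‖e n‖ - jb n ^ (-s₀)), sq_nonneg (jb n ^ s * ‖e n‖),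
          sq_nonneg (jb n ^ (-s₀))]
      refine Summable.of_nonneg_of_le (fun n => ?_) (fun n => ?_) (t.mul_left (N * √(hsNormSq s c)))
      · exact mul_nonneg (mul_nonneg hN0 (mul_nonneg (nn _ _) (norm_nonneg _)))
          (mul_nonneg (mul_nonneg (nn _ _) (norm_nonneg _)) (nn _ _))
      · refine mul_le_mul_of_nonneg_right ?_ (mul_nonneg (mul_nonneg (nn _ _) (norm_nonneg _)) (nn _ _))
        exact mul_le_mul_of_nonneg_left (Real.le_sqrt_of_sq_le (b _)) hN0
    calc _ ≤ jb ξ ^ (s + ρ) * (‖κ‖ * ∑' η, ‖aK χ ε (ξ - η) η * c (ξ - η) * e η‖) := by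
          rw [norm_mul]
          refine mul_le_mul_of_nonneg_left ?_ (nn _ _)
          gcongr
          exact norm_tsum_le_tsum_norm sm
      _ = ∑' η, jb ξ ^ (s + ρ) * (‖κ‖ * ‖aK χ ε (ξ - η) η * c (ξ - η) * e η‖) := by
          rw [tsum_mul_left, tsum_mul_left]
      _ ≤ _ := Summable.tsum_le_tsum hcS ((sm.mul_left _).mul_left _) smR

/-- Lemma 2.6, paraproduct: `fg = T_f g + T_g f + ℛ(f,g)`, where the
remainder has a kernel `a` with off-diagonal decay of any order `ρ ≥ 0`, and for
`0 ≤ ρ ≤ s - s₀` one has `‖ℛ(f,g)‖_{H^{s+ρ}} ≤ C ‖f‖_{H^s} ‖g‖_{H^s}`. -/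
theorem statement_8 (d : ℕ) (hd : 1 ≤ d) (s₀ : ℝ) (hs₀ : (d : ℝ) / 2 < s₀)
    (χ : ℝ → ℝ) (hχ : IsCutoff χ) (ε : ℝ) (hε₀ : 0 < ε) (hε₁ : ε < 1 / 4)
    (s : ℝ) (hs : s₀ ≤ s) :
    ∃ a : Zd d → Zd d → ℂ,
      (∀ ρ : ℝ, 0 ≤ ρ → ∃ Cρ > (0 : ℝ), ∀ v w : Zd d,
        ‖a v w‖ ≤ Cρ * (1 + min (znorm v) (znorm w)) ^ ρ
            / (1 + max (znorm v) (znorm w)) ^ ρ) ∧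
      (∀ f g : Fn d, InHs s f → InHs s g → ∀ ξ : Zd d,
        fCoeff (fun x => f x * g x) ξ
            - paraC χ ε (fun x _ => f x) (fCoeff g) ξ
            - paraC χ ε (fun x _ => g x) (fCoeff f) ξ
          = (((2 * π : ℝ) ^ (-(d : ℝ) / 2) : ℝ) : ℂ) *
              ∑' η : Zd d, a (ξ - η) η * fCoeff f (ξ - η) * fCoeff g η) ∧
      (∀ ρ : ℝ, 0 ≤ ρ → ρ ≤ s - s₀ → ∃ C > (0 : ℝ), ∀ f g : Fn d,
        InHs s f → InHs s g →
        hsNorm (s + ρ)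
            (fun ξ => fCoeff (fun x => f x * g x) ξ
              - paraC χ ε (fun x _ => f x) (fCoeff g) ξ
              - paraC χ ε (fun x _ => g x) (fCoeff f) ξ)
          ≤ C * sobNorm s f * sobNorm s g) := by
  refine ⟨aK χ ε, fun ρ hρ => ⟨(1 + 4 / ε) ^ ρ, by positivity, aK_decay hχ hε₀ hε₁ ρ hρ⟩,
    fun f g hf hg ξ => rem_formula hχ ε s s₀ hs₀ hs f g hf hg ξ, fun ρ hρ hρs => ?_⟩
  obtain ⟨C, hC, h⟩ := rem_bound (d := d) hχ hε₀ hε₁ s s₀ ρ hs₀ hs hρ hρs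
  refine ⟨C, hC, fun f g hf hg => ?_⟩
  simp_rw [rem_formula hχ ε s s₀ hs₀ hs f g hf hg]
  exact h _ _ hf.2.1 hg.2.1

end QLNLS
end
end

section
/- Fix s₀ > d/2 and s ∈ ℕ. Let f(ξ) be an x-independent symbol with |f|_{𝒩^m_s} ≤ C₀ < ∞ and define a(x,ξ) := (∂_{z_j^α}∂_{z_k^β}F)(u,∇u) f(ξ), where z_j^α = ∂_{x_j}^α u^σ, z_k^β = ∂_{x_k}^β u^{σ'}, for some j,k ∈ {1,…,d}, α,β ∈ {0,1}, σ,σ' ∈ {±} (with u^+ = u, u^− = ū). Then for u in the ball of radius R of H^{s+s₀+1}(𝕋^d;ℂ): |a|_{𝒩^m_s} ≤ C ‖u‖_{H^{s+s₀+1}}, where C > 0 depends on ‖u‖_{H^{s+s₀+1}} and is bounded as u → 0. Moreover, for any h ∈ H^{s+s₀+1}, h ↦ (∂_u a)(u;x,ξ)[h] is a ℂ-linear map and |(∂_u a)[h]|_{𝒩^m_s} ≤ C ‖h‖_{H^{s+s₀+1}}; the same holds for ∂_{ū}a. -/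
open MeasureTheory Complex Real Filter

noncomputable section

namespace QLNLS

variable {d : ℕ}

/-- Selects the slot of `F(y₀,…,y_d)` corresponding to `∂^α_{x_j} u`:
slot `0` (i.e. `u`) if `α = 0`, slot `j+1` (i.e. `u_{x_j}`) if `α = 1`. -/
def slotIdx (α : Bool) (j : Fin d) : Fin (d + 1) := if α then Fin.succ j else 0

/-- Wirtinger derivative in slot `j`, with respect to `y_j` (`cflag = false`, sign `σ = +`)
or `ȳ_j` (`cflag = true`, sign `σ = -`). -/
def wdSel {n : ℕ} (cflag : Bool) (j : Fin n) (G : (Fin n → ℂ) → ℂ) : (Fin n → ℂ) → ℂ :=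
  if cflag then wdM j G else wdP j G

/-- The non-homogeneous symbol `a(x,ξ) = (∂_{z_j^α}∂_{z_k^β}F)(u,∇u) f(ξ)`. -/
def nemSym (F : (Fin (d + 1) → ℂ) → ℂ) (α β σ σ' : Bool) (j k : Fin d)
    (f : Vec d → ℂ) (u : Fn d) : Sym d := fun x ξ =>
  wdSel σ (slotIdx α j) (wdSel σ' (slotIdx β k) F) (jet u x) * f ξ

/-- The holomorphic differential `h ↦ (∂_u a)(u)[h]`. -/
def nemSymDu (F : (Fin (d + 1) → ℂ) → ℂ) (α β σ σ' : Bool) (j k : Fin d)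
    (f : Vec d → ℂ) (u h : Fn d) : Sym d := fun x ξ =>
  (∑ l, wdP l (wdSel σ (slotIdx α j) (wdSel σ' (slotIdx β k) F)) (jet u x) * jet h x l) * f ξ

/-- The antiholomorphic differential `h ↦ (∂_{ū} a)(u)[h]`. -/
def nemSymDubar (F : (Fin (d + 1) → ℂ) → ℂ) (α β σ σ' : Bool) (j k : Fin d)
    (f : Vec d → ℂ) (u h : Fn d) : Sym d := fun x ξ =>
  (∑ l, wdM l (wdSel σ (slotIdx α j) (wdSel σ' (slotIdx β k) F)) (jet u x) *
    (starRingEnd ℂ) (jet h x l)) * f ξ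

section Helpers

lemma abs_le_jb (n : Zd d) (i : Fin d) : |(n i : ℝ)| ≤ jb n := by
  unfold jb
  apply Real.abs_le_sqrt
  have := Finset.single_le_sum (f := fun i => ((n i : ℝ)) ^ 2) (fun i _ => sq_nonneg _)
    (Finset.mem_univ i)
  linarith

lemma summable_jb (d : ℕ) (r : ℝ) (hr : r < -(d : ℝ)) : Summable fun n : Zd d => jb n ^ r := by
  classical
  let b := Pi.basisFun ℝ (Fin d)
  let L : Submodule ℤ (Fin d → ℝ) := Submodule.span ℤ (Set.range b)
  have hrk : Module.finrank ℤ L = d := by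
    rw [ZLattice.rank ℝ L]; simp
  have h1 : Summable fun z : L => ‖z‖ ^ r :=
    ZLattice.summable_norm_rpow L r (by rw [hrk]; exact hr)
  have hmem : ∀ n : Zd d, (fun i => (n i : ℝ)) ∈ L := by
    intro n
    have : (fun i => (n i : ℝ)) = ∑ i, n i • b i := by
      ext j
      simp [b, Finset.sum_apply, Pi.single_apply]
    rw [this]
    exact Submodule.sum_mem _ fun i _ => Submodule.smul_mem _ _ (Submodule.subset_span ⟨i, rfl⟩)
  let φ : Zd d → L := fun n => ⟨fun i => (n i : ℝ), hmem n⟩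
  have hφ : Function.Injective φ := by
    intro n n' h
    have h2 := congrArg Subtype.val h
    ext i
    have := congrFun h2 i
    simpa [φ] using this
  have h3 : Summable fun n : Zd d => ‖φ n‖ ^ r := h1.comp_injective hφ
  refine Summable.of_norm_bounded_eventually h3 ?_
  have : {n : Zd d | ¬ ‖jb n ^ r‖ ≤ ‖φ n‖ ^ r} ⊆ {0} := by
    intro n hn
    by_contra h0
    apply hn
    have hpos : 0 < ‖φ n‖ := by
      rw [norm_pos_iff]
      intro h
      apply h0
      have : φ n = φ 0 := by rw [h]; ext i; simp [φ]
      exact hφ this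
    rw [Real.norm_of_nonneg (Real.rpow_nonneg (jb_pos n).le _)]
    apply Real.rpow_le_rpow_of_nonpos hpos
    · have : ‖φ n‖ = ‖(fun i => (n i : ℝ))‖ := rfl
      rw [this, pi_norm_le_iff_of_nonneg (jb_pos n).le]
      intro i
      exact abs_le_jb n i
    · have : (0:ℝ) ≤ d := Nat.cast_nonneg d
      linarith
  exact (Set.finite_singleton _).subset this

/-- the linear phase -/
def phs (n : Zd d) : Vec d →L[ℝ] ℝ := ∑ i, (n i : ℝ) • ContinuousLinearMap.proj i

lemma phs_apply (n : Zd d) (x : Vec d) : phs n x = ∑ i, (n i : ℝ) * x i := by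
  simp [phs]

lemma phs_norm (n : Zd d) : ‖phs n‖ ≤ (d + 1) * jb n := by
  have h : ‖phs n‖ ≤ d * jb n := by
    apply ContinuousLinearMap.opNorm_le_bound _ (by have := jb_pos n; positivity)
    intro x
    rw [phs_apply]
    calc ‖∑ i, (n i : ℝ) * x i‖ ≤ ∑ i : Fin d, jb n * ‖x‖ := by
          apply norm_sum_le_of_le
          intro i _
          rw [norm_mul]
          exact mul_le_mul (abs_le_jb n i) (norm_le_pi_norm x i) (norm_nonneg _) (jb_pos n).le
      _ = _ := by simp [mul_assoc]
  have := jb_pos n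
  linarith

lemma iter_exp (n : Zd d) (k : ℕ) (x : Vec d) :
    ‖iteratedFDeriv ℝ k (fun x : Vec d => Complex.exp (Complex.I *
      ((∑ i, (n i : ℝ) * x i : ℝ) : ℂ))) x‖ ≤ ((d + 1) * jb n) ^ k := by
  let e : ℝ → ℂ := fun t => Complex.exp (Complex.I * (t : ℂ))
  have he : ContDiff ℝ k e := by
    apply ContDiff.cexp
    exact contDiff_const.mul Complex.ofRealCLM.contDiff
  have hd1 : ∀ k : ℕ, iteratedDeriv k e = fun t => Complex.I ^ k * e t := by
    intro k
    induction k with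
    | zero => simp
    | succ k ih =>
      rw [iteratedDeriv_succ, ih]
      ext t
      have h1 : HasDerivAt (fun t : ℝ => Complex.I * (t : ℂ)) Complex.I t := by
        simpa using (Complex.ofRealCLM.hasDerivAt (x := t)).const_mul Complex.I
      have h2 := (h1.cexp.const_mul (Complex.I ^ k)).deriv
      simp only [e]
      rw [h2]; ring
  have heq : (fun x : Vec d => Complex.exp (Complex.I *
      ((∑ i, (n i : ℝ) * x i : ℝ) : ℂ))) = e ∘ (phs n) := by
    ext x; simp only [Function.comp, e, phs_apply]
  rw [heq, ContinuousLinearMap.iteratedFDeriv_comp_right _ he _ le_rfl]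
  refine (ContinuousMultilinearMap.norm_compContinuousLinearMap_le _ _).trans ?_
  rw [norm_iteratedFDeriv_eq_norm_iteratedDeriv, hd1]
  have : ‖e (phs n x)‖ = 1 := by
    simp only [e]; rw [mul_comm]; exact Complex.norm_exp_ofReal_mul_I _
  simp only [norm_mul, norm_pow, Complex.norm_I, this, one_pow, one_mul, Finset.prod_const,
    Finset.card_univ, Fintype.card_fin]
  exact pow_le_pow_left₀ (norm_nonneg _) (phs_norm n) k

lemma sobolev (d : ℕ) (s₀ : ℝ) (hs₀ : (d : ℝ) / 2 < s₀) (s : ℕ) :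
    ∃ K : ℝ, 0 ≤ K ∧ ∀ u : Fn d, InHs ((s : ℝ) + s₀ + 1) u →
      ContDiff ℝ ((s + 1 : ℕ) : ℕ∞) u ∧ ∀ k ≤ s + 1, ∀ x,
        ‖iteratedFDeriv ℝ k u x‖ ≤ K * sobNorm ((s : ℝ) + s₀ + 1) u := by
  set c : ℝ := (2 * π : ℝ) ^ (-(d : ℝ) / 2) with hc
  have hc0 : 0 ≤ c := by positivity
  have hg : Summable fun n : Zd d => (jb n ^ (-s₀)) ^ (2 : ℝ) := by
    have := summable_jb d (-s₀ * 2) (by linarith)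
    refine this.congr fun n => ?_
    rw [← Real.rpow_mul (jb_pos n).le]
  set S := ∑' n : Zd d, (jb n ^ (-s₀)) ^ (2 : ℝ) with hS
  refine ⟨c * (d + 1) ^ (s + 1) * S ^ (1 / (2 : ℝ)), ?_, ?_⟩
  · have : 0 ≤ S := tsum_nonneg fun n => by have := jb_pos n; positivity
    positivity
  rintro u ⟨-, hu, hsum⟩
  set σ := (s : ℝ) + s₀ + 1 with hσ
  have hbsq : ∀ n, (jb n ^ σ * ‖fCoeff u n‖) ^ (2 : ℝ) = jb n ^ (2 * σ) * ‖fCoeff u n‖ ^ 2 := by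
    intro n
    have := jb_pos n
    rw [Real.mul_rpow (by positivity) (by positivity), ← Real.rpow_mul this.le, mul_comm σ,
      Real.rpow_two]
  have hb : Summable fun n : Zd d => (jb n ^ σ * ‖fCoeff u n‖) ^ (2 : ℝ) := by
    simp_rw [hbsq]; exact hu
  obtain ⟨hs1, hs2⟩ := Real.summable_and_inner_le_Lp_mul_Lq_tsum_of_nonneg
    (Real.HolderConjugate.two_two)
    (fun n => by have := jb_pos n; positivity) (fun n => by have := jb_pos n; positivity) hb hg
  have hnorm : sobNorm σ u = (∑' n : Zd d, (jb n ^ σ * ‖fCoeff u n‖) ^ (2 : ℝ)) ^ (1 / (2:ℝ)) := by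
    rw [← Real.sqrt_eq_rpow]
    simp_rw [hbsq]; rfl
  rw [← hnorm] at hs2
  set v : Zd d → ℝ := fun n => c * (d + 1) ^ (s + 1) *
    (jb n ^ σ * ‖fCoeff u n‖ * jb n ^ (-s₀)) with hv
  have hvs : Summable v := hs1.mul_left _
  set fn : Zd d → Vec d → ℂ := fun n x => ((c : ℝ) : ℂ) * fCoeff u n *
        Complex.exp (Complex.I * ((∑ i, (n i : ℝ) * x i : ℝ) : ℂ)) with hfn
  have hexp : ∀ n : Zd d, ContDiff ℝ ((s + 1 : ℕ) : ℕ∞) (fun x : Vec d => Complex.exp (Complex.I *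
      ((∑ i, (n i : ℝ) * x i : ℝ) : ℂ))) := by
    intro n
    apply ContDiff.cexp
    apply contDiff_const.mul
    simp_rw [← phs_apply]
    exact Complex.ofRealCLM.contDiff.comp (phs n).contDiff
  have hcd : ∀ n, ContDiff ℝ ((s + 1 : ℕ) : ℕ∞) (fn n) := fun n => contDiff_const.mul (hexp n)
  have hbd : ∀ (k : ℕ) (n : Zd d) (x : Vec d), (k : ℕ∞) ≤ ((s + 1 : ℕ) : ℕ∞) →
      ‖iteratedFDeriv ℝ k (fn n) x‖ ≤ v n := by
    intro k n x hk
    have hk' : k ≤ s + 1 := by exact_mod_cast hk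
    have hj := jb_pos n
    have e1 : iteratedFDeriv ℝ k (fn n) x = (((c : ℝ) : ℂ) * fCoeff u n) •
        iteratedFDeriv ℝ k (fun x : Vec d => Complex.exp (Complex.I *
      ((∑ i, (n i : ℝ) * x i : ℝ) : ℂ))) x := by
      rw [← iteratedFDeriv_const_smul_apply]
      · rfl
      · exact ((hexp n).of_le (by exact_mod_cast hk')).contDiffAt
    rw [e1, norm_smul, norm_mul, Complex.norm_real, Real.norm_of_nonneg hc0]
    have e2 : ((d + 1) * jb n) ^ k ≤ ((d + 1) * jb n) ^ (s + 1) := by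
      apply pow_le_pow_right₀ _ hk'
      have := one_le_jb n
      have hd : (0:ℝ) ≤ d := Nat.cast_nonneg d
      nlinarith
    have e3 : jb n ^ (s + 1) = jb n ^ σ * jb n ^ (-s₀) := by
      rw [← Real.rpow_add hj, ← Real.rpow_natCast]
      congr 1; push_cast; ring
    calc _ ≤ c * ‖fCoeff u n‖ * ((d + 1) * jb n) ^ (s + 1) := by
          gcongr
          exact (iter_exp n k x).trans e2
      _ = v n := by
          rw [mul_pow, e3, hv]; ring
  have hueq : u = fun x => ∑' n, fn n x := by
    ext x; exact (hsum x).tsum_eq.symm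
  refine ⟨?_, ?_⟩
  · rw [hueq]
    exact contDiff_tsum (v := fun _ => v) hcd (fun _ _ => hvs) hbd
  · intro k hk x
    have hk' : (k : ℕ∞) ≤ ((s + 1 : ℕ) : ℕ∞) := by exact_mod_cast hk
    have h1 : iteratedFDeriv ℝ k u x = ∑' n, iteratedFDeriv ℝ k (fn n) x := by
      conv_lhs => rw [hueq]
      rw [iteratedFDeriv_tsum (v := fun _ => v) hcd (fun _ _ => hvs) hbd hk']
    rw [h1]
    refine (tsum_of_norm_bounded hvs.hasSum fun n => hbd k n x hk').trans ?_
    rw [hv, tsum_mul_left]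
    calc _ ≤ c * (d + 1) ^ (s + 1) * (sobNorm σ u * S ^ (1 / (2:ℝ))) := by gcongr
      _ = _ := by ring


/-- iterated partial derivatives -/
def pdL (l : List (Fin d)) (g : Fn d) : Fn d := l.foldr (fun i b => pdF i b) g

lemma pdF_mul_const (i : Fin d) (g : Fn d) (c : ℂ) :
    pdF i (fun y => g y * c) = fun y => pdF i g y * c := by
  ext x
  have : (fun y => g y * c) = c • g := by ext y; simp [mul_comm]
  simp only [pdF]
  rw [this, fderiv_const_smul_field]
  simp [mul_comm]

lemma pdF_const_mul (i : Fin d) (g : Fn d) (c : ℂ) :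
    pdF i (fun y => c * g y) = fun y => c * pdF i g y := by
  simp_rw [mul_comm c]
  exact pdF_mul_const i g c

/-- the x-directions -/
def lx (L : List (Fin d ⊕ Fin d)) : List (Fin d) := L.filterMap Sum.getLeft?
/-- the xi-directions -/
def lxi (L : List (Fin d ⊕ Fin d)) : List (Fin d) := L.filterMap Sum.getRight?

lemma mderiv_prod (L : List (Fin d ⊕ Fin d)) (g f : Fn d) :
    mderiv L (fun x ξ => g x * f ξ) = fun x ξ => pdL (lx L) g x * pdL (lxi L) f ξ := by
  induction L with
  | nil => rfl
  | cons i L ih =>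
    have h : ∀ a : Sym d, mderiv (i :: L) a
        = match i with | Sum.inl j => pdx j (mderiv L a) | Sum.inr j => pdxi j (mderiv L a) :=
      fun a => rfl
    rw [h, ih]
    rcases i with i | i
    · ext x ξ
      exact congrFun (pdF_mul_const i (pdL (lx L) g) (pdL (lxi L) f ξ)) x
    · ext x ξ
      exact congrFun (pdF_const_mul i (pdL (lxi L) f) (pdL (lx L) g x)) ξ

lemma mderiv_xi (l : List (Fin d)) (f : Fn d) :
    mderiv (l.map Sum.inr) (fun _ ξ => f ξ) = fun _ ξ => pdL l f ξ := by
  induction l with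
  | nil => rfl
  | cons i l ih =>
    have h : ∀ a : Sym d, mderiv ((i :: l).map Sum.inr) a = pdxi i (mderiv (l.map Sum.inr) a) :=
      fun a => rfl
    rw [h, ih]; rfl

lemma nXi_eq (L : List (Fin d ⊕ Fin d)) : nXi L = (lxi L).length := by
  induction L with
  | nil => rfl
  | cons i L ih =>
    rcases i with i | i
    · exact ih
    · exact congrArg Nat.succ ih

lemma nXi_map (l : List (Fin d)) : nXi (l.map Sum.inr) = l.length := by
  induction l with
  | nil => rfl
  | cons i L ih => exact congrArg Nat.succ ih

lemma symNorm_nonneg (m : ℝ) (s : ℕ) (a : Sym d) : 0 ≤ symNorm m s a := by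
  apply Real.sSup_nonneg
  rintro r ⟨L, x, ξ, -, rfl⟩
  have : 0 ≤ jbR ξ := Real.sqrt_nonneg _
  positivity

lemma symNorm_prod_le (m : ℝ) (s : ℕ) (g f : Fn d)
    (hf : BddAbove (symVals m s (fun (_ : Vec d) ξ => f ξ))) (B : ℝ) (hB : 0 ≤ B)
    (hg : ∀ l : List (Fin d), l.length ≤ s → ∀ x, ‖pdL l g x‖ ≤ B) :
    symNorm m s (fun x ξ => g x * f ξ) ≤ symNorm m s (fun (_ : Vec d) ξ => f ξ) * B := by
  apply Real.sSup_le _ (mul_nonneg (symNorm_nonneg _ _ _) hB)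
  rintro r ⟨L, x, ξ, hL, rfl⟩
  rw [mderiv_prod]
  have h1 : (lx L).length ≤ s := (List.length_filterMap_le _ _).trans hL
  have h2 : (lxi L).length ≤ s := (List.length_filterMap_le _ _).trans hL
  have h3 : jbR ξ ^ (-m + (nXi L : ℝ)) * ‖pdL (lxi L) f ξ‖
      ≤ symNorm m s (fun (_ : Vec d) ξ => f ξ) := by
    apply le_csSup hf
    refine ⟨(lxi L).map Sum.inr, x, ξ, by simpa using h2, ?_⟩
    rw [mderiv_xi, nXi_map, nXi_eq]
  rw [norm_mul]
  calc _ = (jbR ξ ^ (-m + (nXi L : ℝ)) * ‖pdL (lxi L) f ξ‖) * ‖pdL (lx L) g x‖ := by ring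
    _ ≤ _ := mul_le_mul h3 (hg _ h1 x) (norm_nonneg _) (symNorm_nonneg _ _ _)

lemma pdF_iter (i : Fin d) (k : ℕ) (w : Fn d) (hw : ContDiff ℝ ((k + 1 : ℕ) : ℕ∞) w) :
    ContDiff ℝ (k : ℕ∞) (pdF i w) ∧
      ∀ n ≤ k, ∀ x, ‖iteratedFDeriv ℝ n (pdF i w) x‖ ≤ ‖iteratedFDeriv ℝ (n + 1) w x‖ := by
  let A := ContinuousLinearMap.apply ℝ ℂ (Pi.single i 1 : Vec d)
  have hA : ‖A‖ ≤ 1 := by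
    apply ContinuousLinearMap.opNorm_le_bound _ zero_le_one
    intro L
    have h1 : ‖(Pi.single i 1 : Vec d)‖ ≤ 1 := by
      rw [pi_norm_le_iff_of_nonneg zero_le_one]
      intro j
      by_cases h : j = i
      · subst h; simp
      · simp [h]
    calc ‖L (Pi.single i 1)‖ ≤ ‖L‖ * ‖(Pi.single i 1 : Vec d)‖ := L.le_opNorm _
      _ ≤ ‖L‖ * 1 := by gcongr
      _ = 1 * ‖L‖ := by ring
  have hfd : ContDiff ℝ (k : ℕ∞) (fderiv ℝ w) :=
    hw.fderiv_right (by push_cast; exact le_rfl)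
  refine ⟨A.contDiff.comp hfd, ?_⟩
  intro n hn x
  have := A.norm_iteratedFDeriv_comp_left (f := fderiv ℝ w) (x := x) hfd.contDiffAt
    (n := n) (by exact_mod_cast hn)
  rw [norm_iteratedFDeriv_fderiv] at this
  refine this.trans ?_
  calc _ ≤ 1 * ‖iteratedFDeriv ℝ (n + 1) w x‖ := by gcongr
    _ = _ := one_mul _

lemma pdL_iter (l : List (Fin d)) (g : Fn d) : ∀ (k : ℕ),
    ContDiff ℝ ((k + l.length : ℕ) : ℕ∞) g →
    ContDiff ℝ (k : ℕ∞) (pdL l g) ∧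
      ∀ n ≤ k, ∀ x, ‖iteratedFDeriv ℝ n (pdL l g) x‖ ≤ ‖iteratedFDeriv ℝ (n + l.length) g x‖ := by
  induction l with
  | nil => intro k h; exact ⟨h, fun n _ x => le_rfl⟩
  | cons i l ih =>
    intro k h
    obtain ⟨h1, h2⟩ := ih (k + 1) (by convert h using 3; simp; ring)
    obtain ⟨h3, h4⟩ := pdF_iter i k (pdL l g) h1
    refine ⟨h3, fun n hn x => (h4 n hn x).trans ?_⟩
    have := h2 (n + 1) (by omega) x
    rwa [show n + 1 + l.length = n + (i :: l).length by simp; ring] at this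

lemma pdL_bound (s : ℕ) (g : Fn d) (hg : ContDiff ℝ (s : ℕ∞) g) (B : ℝ)
    (hB : ∀ n ≤ s, ∀ x, ‖iteratedFDeriv ℝ n g x‖ ≤ B) (l : List (Fin d)) (hl : l.length ≤ s)
    (x : Vec d) : ‖pdL l g x‖ ≤ B := by
  have := (pdL_iter l g 0 (hg.of_le (by simpa using hl))).2 0 le_rfl x
  rw [norm_iteratedFDeriv_zero] at this
  exact this.trans (hB _ (by simpa using hl) x)

lemma ball_bound {Y : Type*} [NormedAddCommGroup Y] [NormedSpace ℝ Y] [FiniteDimensional ℝ Y]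
    (G : Y → ℂ) (hG : ContDiff ℝ (⊤ : ℕ∞) G) (s : ℕ) (M : ℝ) :
    ∃ A : ℝ, 0 ≤ A ∧ ∀ y : Y, ‖y‖ ≤ M → ∀ k ≤ s, ‖iteratedFDeriv ℝ k G y‖ ≤ A := by
  have : ProperSpace Y := FiniteDimensional.proper ℝ Y
  have h : ∀ k : ℕ, ∃ A : ℝ, ∀ y ∈ Metric.closedBall (0 : Y) M, ‖iteratedFDeriv ℝ k G y‖ ≤ A := by
    intro k
    apply (isCompact_closedBall (0 : Y) M).exists_bound_of_continuousOn
    exact (hG.continuous_iteratedFDeriv (by exact_mod_cast le_top)).continuousOn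
  choose A hA using h
  refine ⟨∑ k ∈ Finset.range (s + 1), |A k|, Finset.sum_nonneg fun _ _ => abs_nonneg _, ?_⟩
  intro y hy k hk
  calc _ ≤ |A k| := (hA k y (by simpa using hy)).trans (le_abs_self _)
    _ ≤ _ := Finset.single_le_sum (f := fun k => |A k|) (fun _ _ => abs_nonneg _)
      (Finset.mem_range.2 (by omega))

lemma comp_bound {Y : Type*} [NormedAddCommGroup Y] [NormedSpace ℝ Y] [FiniteDimensional ℝ Y]
    (G : Y → ℂ) (hG : ContDiff ℝ (⊤ : ℕ∞) G) (s : ℕ) (M : ℝ) (hM : 1 ≤ M) :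
    ∃ A : ℝ, 0 ≤ A ∧ ∀ v : Vec d → Y, ContDiff ℝ (s : ℕ∞) v → ∀ x,
      (∀ k ≤ s, ‖iteratedFDeriv ℝ k v x‖ ≤ M) →
      ∀ k ≤ s, ‖iteratedFDeriv ℝ k (fun x => G (v x)) x‖ ≤ A := by
  obtain ⟨A, hA0, hA⟩ := ball_bound G hG s M
  refine ⟨s.factorial * A * M ^ s, by positivity, ?_⟩
  intro v hv x hx k hk
  have h := norm_iteratedFDeriv_comp_le (n := k) (N := ((s : ℕ∞) : WithTop ℕ∞)) (g := G) (f := v)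
    (hG.of_le (by exact_mod_cast le_top)) hv (by exact_mod_cast hk) x (C := A) (D := M)
    (fun i hi => hA _ (by simpa using hx 0 (Nat.zero_le _)) i (hi.trans hk))
    (fun i h1 hi => (hx i (hi.trans hk)).trans (le_self_pow₀ hM (by omega)))
  refine le_trans h ?_
  gcongr

lemma comp_lin_bound {Y : Type*} [NormedAddCommGroup Y] [NormedSpace ℝ Y] [FiniteDimensional ℝ Y]
    (G : Y → ℂ) (hG : ContDiff ℝ (⊤ : ℕ∞) G) (hG0 : G 0 = 0) (s : ℕ) (M : ℝ) (hM : 1 ≤ M) :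
    ∃ A : ℝ, 0 ≤ A ∧ ∀ v : Vec d → Y, ContDiff ℝ (s : ℕ∞) v → ∀ x, ∀ ε ≤ M,
      (∀ k ≤ s, ‖iteratedFDeriv ℝ k v x‖ ≤ ε) →
      ∀ k ≤ s, ‖iteratedFDeriv ℝ k (fun x => G (v x)) x‖ ≤ A * ε := by
  obtain ⟨A, hA0, hA⟩ := ball_bound G hG (s + 1) M
  refine ⟨s.factorial * A * M ^ s, by positivity, ?_⟩
  intro v hv x ε hε hx k hk
  have hv0 : ‖v x‖ ≤ ε := by simpa using hx 0 (Nat.zero_le _)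
  have hε0 : 0 ≤ ε := (norm_nonneg _).trans hv0
  have hfac : (1:ℝ) ≤ s.factorial := by exact_mod_cast Nat.one_le_iff_ne_zero.2 s.factorial_ne_zero
  rcases Nat.eq_zero_or_pos k with rfl | hkpos
  · rw [norm_iteratedFDeriv_zero]
    have h1 := (convex_closedBall (0 : Y) M).norm_image_sub_le_of_norm_fderiv_le (𝕜 := ℝ) (f := G)
      (C := A) (x := 0) (y := v x)
      (fun y _ => (hG.differentiable (by simp)) y)
      (fun y hy => by
        have := hA y (by simpa using hy) 1 (by omega)
        rwa [norm_iteratedFDeriv_one] at this)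
      (by simp; linarith) (by simpa using hv0.trans hε)
    rw [hG0, sub_zero, sub_zero] at h1
    have : (1:ℝ) ≤ s.factorial * M ^ s := one_le_mul_of_one_le_of_one_le hfac (one_le_pow₀ hM)
    calc _ ≤ A * ‖v x‖ := h1
      _ ≤ A * ε := by gcongr
      _ = 1 * (A * ε) := by ring
      _ ≤ (s.factorial * M ^ s) * (A * ε) := by gcongr
      _ = _ := by ring
  · have hM0 : 0 < M := by linarith
    set δ := ε / M with hδ
    have hδ0 : 0 ≤ δ := by positivity
    have hδ1 : δ ≤ 1 := by rw [hδ, div_le_one hM0]; exact hε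
    set ρ := δ ^ (1 / (k : ℝ)) with hρ
    have hρ0 : 0 ≤ ρ := by positivity
    have hρ1 : ρ ≤ 1 := Real.rpow_le_one hδ0 hδ1 (by positivity)
    have hρk : ρ ^ k = δ := by
      rw [hρ, one_div]; exact Real.rpow_inv_natCast_pow hδ0 (by omega)
    have hMδ : M * δ = ε := by rw [hδ]; field_simp
    have h := norm_iteratedFDeriv_comp_le (n := k) (N := ((s : ℕ∞) : WithTop ℕ∞)) (g := G) (f := v)
      (hG.of_le (by exact_mod_cast le_top)) hv (by exact_mod_cast hk) x (C := A) (D := M * ρ)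
      (fun i hi => hA _ (hv0.trans hε) i (by omega))
      (fun i h1 hi => by
        refine (hx i (hi.trans hk)).trans ?_
        rw [mul_pow, ← hMδ, ← hρk]
        have e1 : M ≤ M ^ i := le_self_pow₀ hM (by omega)
        have e2 : ρ ^ k ≤ ρ ^ i := pow_le_pow_of_le_one hρ0 hρ1 hi
        gcongr)
    refine le_trans h ?_
    have e3 : (M * ρ) ^ k ≤ M ^ s * ε := by
      rw [mul_pow, hρk]
      have : M ^ k ≤ M ^ s := pow_le_pow_right₀ hM hk
      have : δ ≤ ε := by rw [← hMδ]; nlinarith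
      gcongr
    have e4 : (k.factorial : ℝ) ≤ s.factorial := by exact_mod_cast Nat.factorial_le hk
    calc _ ≤ s.factorial * A * (M ^ s * ε) := by gcongr
      _ = _ := by ring

lemma sum_mul_bound {ι : Type*} [Fintype ι] (s : ℕ) (P w : ι → Fn d) (A ε : ℝ)
    (hA0 : 0 ≤ A)
    (hP : ∀ l, ContDiff ℝ (s : ℕ∞) (P l)) (hw : ∀ l, ContDiff ℝ (s : ℕ∞) (w l))
    (hPb : ∀ l, ∀ k ≤ s, ∀ x, ‖iteratedFDeriv ℝ k (P l) x‖ ≤ A)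
    (hwb : ∀ l, ∀ k ≤ s, ∀ x, ‖iteratedFDeriv ℝ k (w l) x‖ ≤ ε) (hε : 0 ≤ ε) :
    ContDiff ℝ (s : ℕ∞) (fun x => ∑ l, P l x * w l x) ∧
    ∀ k ≤ s, ∀ x, ‖iteratedFDeriv ℝ k (fun x => ∑ l, P l x * w l x) x‖
      ≤ (Fintype.card ι * 2 ^ s * A) * ε := by
  refine ⟨ContDiff.sum fun l _ => (hP l).mul (hw l), ?_⟩
  intro k hk x
  have hk' : ((k : ℕ) : WithTop ℕ∞) ≤ ((s : ℕ∞) : WithTop ℕ∞) := by exact_mod_cast hk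
  have h1 : iteratedFDeriv ℝ k (fun x => ∑ l, P l x * w l x) x
      = ∑ l, iteratedFDeriv ℝ k (fun x => P l x * w l x) x := by
    rw [iteratedFDeriv_fun_sum_apply]
    intro l _
    exact (((hP l).mul (hw l)).of_le hk').contDiffAt
  rw [h1]
  have h2 : ∀ l, ‖iteratedFDeriv ℝ k (fun x => P l x * w l x) x‖ ≤ 2 ^ s * A * ε := by
    intro l
    refine (norm_iteratedFDeriv_mul_le (hP l) (hw l) x hk').trans ?_
    calc _ ≤ ∑ i ∈ Finset.range (k + 1), (k.choose i : ℝ) * A * ε := by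
          apply Finset.sum_le_sum
          intro i hi
          have hi' : i ≤ k := by simpa [Nat.lt_succ_iff] using hi
          have a1 := hPb l i (by omega) x
          have a2 := hwb l (k - i) (by omega) x
          gcongr
      _ = 2 ^ k * A * ε := by
          rw [← Finset.sum_mul, ← Finset.sum_mul]
          congr 2
          exact_mod_cast Nat.sum_range_choose k
      _ ≤ _ := by
          have : (2:ℝ) ^ k ≤ 2 ^ s := pow_le_pow_right₀ (by norm_num) hk
          gcongr
  calc _ ≤ ∑ l : ι, 2 ^ s * A * ε := norm_sum_le_of_le _ fun l _ => h2 l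
    _ = _ := by simp; ring

lemma jet_bound (d s : ℕ) : ∃ J : ℝ, 0 ≤ J ∧ ∀ u : Fn d, ContDiff ℝ ((s + 1 : ℕ) : ℕ∞) u →
    ContDiff ℝ (s : ℕ∞) (jet u) ∧ ∀ N : ℝ, (∀ k ≤ s + 1, ∀ x, ‖iteratedFDeriv ℝ k u x‖ ≤ N) →
      ∀ k ≤ s, ∀ x, ‖iteratedFDeriv ℝ k (jet u) x‖ ≤ J * N := by
  let A : ℂ →L[ℝ] (Fin (d + 1) → ℂ) :=
    ContinuousLinearMap.pi (Fin.cons (ContinuousLinearMap.id ℝ ℂ) fun _ => 0)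
  let B : (Vec d →L[ℝ] ℂ) →L[ℝ] (Fin (d + 1) → ℂ) :=
    ContinuousLinearMap.pi (Fin.cons 0 fun j =>
      ContinuousLinearMap.apply ℝ ℂ (Pi.single j 1 : Vec d))
  refine ⟨‖A‖ + ‖B‖, by positivity, ?_⟩
  intro u hu
  have hj : jet u = (A ∘ u) + (B ∘ fderiv ℝ u) := by
    ext x l
    refine Fin.cases ?_ (fun j => ?_) l
    · simp [jet, A, B]
    · simp [jet, A, B, pdF]
  have hfd : ContDiff ℝ (s : ℕ∞) (fderiv ℝ u) :=
    hu.fderiv_right (by push_cast; exact le_rfl)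
  have hus : ContDiff ℝ (s : ℕ∞) u := hu.of_le (by exact_mod_cast Nat.le_succ s)
  have c1 : ContDiff ℝ (s : ℕ∞) (A ∘ u) := A.contDiff.comp hus
  have c2 : ContDiff ℝ (s : ℕ∞) (B ∘ fderiv ℝ u) := B.contDiff.comp hfd
  refine ⟨hj ▸ c1.add c2, ?_⟩
  intro N hN k hk x
  have hk' : ((k : ℕ) : WithTop ℕ∞) ≤ ((s : ℕ∞) : WithTop ℕ∞) := by exact_mod_cast hk
  rw [hj, iteratedFDeriv_add_apply (c1.of_le hk').contDiffAt (c2.of_le hk').contDiffAt]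
  have e1 := A.norm_iteratedFDeriv_comp_left (x := x) hus.contDiffAt hk'
  have e2 := B.norm_iteratedFDeriv_comp_left (x := x) hfd.contDiffAt hk'
  rw [norm_iteratedFDeriv_fderiv] at e2
  have n1 := hN k (by omega) x
  have n2 := hN (k + 1) (by omega) x
  calc _ ≤ ‖A‖ * ‖iteratedFDeriv ℝ k u x‖ + ‖B‖ * ‖iteratedFDeriv ℝ (k + 1) u x‖ :=
        (norm_add_le _ _).trans (add_le_add e1 e2)
    _ ≤ ‖A‖ * N + ‖B‖ * N := by gcongr
    _ = _ := by ring

/-- Wirtinger functional. -/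
def wfun {n : ℕ} (c : Bool) (j : Fin n) : ((Fin n → ℂ) →L[ℝ] ℂ) →L[ℝ] ℂ :=
  (1 / 2 : ℂ) • (ContinuousLinearMap.apply ℝ ℂ (Pi.single j 1 : Fin n → ℂ) +
    (if c then Complex.I else -Complex.I) •
      ContinuousLinearMap.apply ℝ ℂ (Pi.single j Complex.I : Fin n → ℂ))

lemma wdSel_eq {n : ℕ} (c : Bool) (j : Fin n) (G : (Fin n → ℂ) → ℂ) :
    wdSel c j G = (wfun c j) ∘ fderiv ℝ G := by
  ext y
  cases c
  · simp [wdSel, wfun, wdP]; ring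
  · simp [wdSel, wfun, wdM]; ring

lemma wdSel_smooth {n : ℕ} (c : Bool) (j : Fin n) (G : (Fin n → ℂ) → ℂ)
    (hG : ContDiff ℝ (⊤ : ℕ∞) G) : ContDiff ℝ (⊤ : ℕ∞) (wdSel c j G) := by
  rw [wdSel_eq]
  exact (wfun c j).contDiff.comp (hG.fderiv_right (by simp))

lemma wdSel2_zero (F : (Fin (d + 1) → ℂ) → ℂ) (hF : GoodF d F) (c c' : Bool) (i i' : Fin (d + 1)) :
    wdSel c i (wdSel c' i' F) 0 = 0 := by
  obtain ⟨h1, -, h3⟩ := hF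
  have h2 : fderiv ℝ (fderiv ℝ F) 0 = 0 := by
    have e1 : ‖iteratedFDeriv ℝ 1 (fderiv ℝ F) 0‖ = 0 := by
      rw [norm_iteratedFDeriv_fderiv, h3 2 le_rfl, norm_zero]
    rw [norm_iteratedFDeriv_one] at e1
    exact norm_eq_zero.1 e1
  have hd : DifferentiableAt ℝ (fderiv ℝ F) 0 :=
    ((h1.fderiv_right (m := (⊤ : ℕ∞)) (by simp)).differentiable (by simp)) 0
  have h4 := ((wfun c' i').hasFDerivAt.comp 0 hd.hasFDerivAt).fderiv
  rw [wdSel_eq, Function.comp, wdSel_eq, h4, h2]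
  simp

end Helpers

/-- Lemma 2.8: estimates for non-homogeneous symbols
`a(x,ξ) = (∂_{z_j^α}∂_{z_k^β}F)(u,∇u) f(ξ)`: for `u` in a ball of `H^{s+s₀+1}`,
`|a|_{𝒩^m_s} ≤ C ‖u‖_{H^{s+s₀+1}}`, the differentials `∂_u a`, `∂_{ū}a` are
(anti)linear in `h` and satisfy `|(∂_u a)[h]|_{𝒩^m_s} ≤ C ‖h‖_{H^{s+s₀+1}}`. -/
theorem statement_9 (d : ℕ) (hd : 1 ≤ d) (s₀ : ℝ) (hs₀ : (d : ℝ) / 2 < s₀)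
    (s : ℕ) (m : ℝ) (F : (Fin (d + 1) → ℂ) → ℂ) (hF : GoodF d F)
    (f : Vec d → ℂ) (C₀ : ℝ)
    (hf : InSymClass m s (fun (_ : Vec d) ξ => f ξ))
    (hfC : symNorm m s (fun (_ : Vec d) ξ => f ξ) ≤ C₀)
    (α β σ σ' : Bool) (j k : Fin d) (Rad : ℝ) (hRad : 0 < Rad) :
    ∃ C : ℝ → ℝ, GoodConst C ∧
      ∀ u : Fn d, InHs ((s : ℝ) + s₀ + 1) u → sobNorm ((s : ℝ) + s₀ + 1) u < Rad →
        (symNorm m s (nemSym F α β σ σ' j k f u)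
            ≤ C (sobNorm ((s : ℝ) + s₀ + 1) u) * sobNorm ((s : ℝ) + s₀ + 1) u) ∧
        (∀ h₁ h₂ : Fn d, InHs ((s : ℝ) + s₀ + 1) h₁ → InHs ((s : ℝ) + s₀ + 1) h₂ →
          ∀ x ξ : Vec d,
            nemSymDu F α β σ σ' j k f u (h₁ + h₂) x ξ
              = nemSymDu F α β σ σ' j k f u h₁ x ξ + nemSymDu F α β σ σ' j k f u h₂ x ξ) ∧
        (∀ (z : ℂ) (h : Fn d), InHs ((s : ℝ) + s₀ + 1) h → ∀ x ξ : Vec d,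
          nemSymDu F α β σ σ' j k f u (fun y => z * h y) x ξ
            = z * nemSymDu F α β σ σ' j k f u h x ξ) ∧
        (∀ h : Fn d, InHs ((s : ℝ) + s₀ + 1) h →
          symNorm m s (nemSymDu F α β σ σ' j k f u h)
              ≤ C (sobNorm ((s : ℝ) + s₀ + 1) u) * sobNorm ((s : ℝ) + s₀ + 1) h ∧
          symNorm m s (nemSymDubar F α β σ σ' j k f u h)
              ≤ C (sobNorm ((s : ℝ) + s₀ + 1) u) * sobNorm ((s : ℝ) + s₀ + 1) h) := by
  obtain ⟨K, hK0, hK⟩ := sobolev d s₀ hs₀ s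
  obtain ⟨J, hJ0, hJ⟩ := jet_bound d s
  set ς := (s : ℝ) + s₀ + 1 with hς
  set G := wdSel σ (slotIdx α j) (wdSel σ' (slotIdx β k) F) with hGdef
  have hG : ContDiff ℝ (⊤ : ℕ∞) G := wdSel_smooth _ _ _ (wdSel_smooth _ _ _ hF.1)
  have hG0 : G 0 = 0 := wdSel2_zero F hF _ _ _ _
  have hnn : ∀ u : Fn d, 0 ≤ sobNorm ς u := fun u => Real.sqrt_nonneg _
  set M := max 1 (J * (K * Rad)) with hM
  have hM1 : 1 ≤ M := le_max_left _ _
  obtain ⟨A, hA0, hA⟩ := comp_lin_bound (d := d) G hG hG0 s M hM1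
  have hH : ∀ (c : Bool) (l : Fin (d + 1)), ContDiff ℝ (⊤ : ℕ∞) (wdSel c l G) :=
    fun c l => wdSel_smooth c l G hG
  choose A' hA'0 hA' using fun (c : Bool) (l : Fin (d + 1)) =>
    comp_bound (d := d) (wdSel c l G) (hH c l) s M hM1
  set A2 := ∑ c, ∑ l, A' c l with hA2
  have hA2le : ∀ c l, A' c l ≤ A2 := by
    intro c l
    calc A' c l ≤ ∑ l, A' c l := Finset.single_le_sum (f := fun l => A' c l)
          (fun l _ => hA'0 c l) (Finset.mem_univ l)
      _ ≤ _ := Finset.single_le_sum (f := fun c => ∑ l, A' c l)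
          (fun c _ => Finset.sum_nonneg fun l _ => hA'0 c l) (Finset.mem_univ c)
  have hA20 : 0 ≤ A2 := (hA'0 true 0).trans (hA2le true 0)
  set S := symNorm m s (fun (_ : Vec d) ξ => f ξ) with hS
  have hS0 : 0 ≤ S := symNorm_nonneg _ _ _
  set E := (Fintype.card (Fin (d + 1)) * 2 ^ s * A2 : ℝ) with hE
  have hE0 : 0 ≤ E := by positivity
  set C := S * (A * (J * K)) + S * (E * (J * K)) + 1 with hC
  have hC1 : S * (A * (J * K)) ≤ C := by
    have : 0 ≤ S * (E * (J * K)) := by positivity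
    linarith
  have hC2 : S * (E * (J * K)) ≤ C := by
    have : 0 ≤ S * (A * (J * K)) := by positivity
    linarith
  have hC0 : 0 < C := by positivity
  have hjet : ∀ u : Fn d, InHs ς u → ContDiff ℝ (s : ℕ∞) (jet u) ∧
      ∀ k ≤ s, ∀ x, ‖iteratedFDeriv ℝ k (jet u) x‖ ≤ J * (K * sobNorm ς u) := by
    intro u hu
    exact ⟨(hJ u (hK u hu).1).1, (hJ u (hK u hu).1).2 _ (hK u hu).2⟩
  have hdiff : ∀ u : Fn d, InHs ς u → Differentiable ℝ u := fun u hu =>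
    (hK u hu).1.differentiable (by simp)
  refine ⟨fun _ => C, ⟨fun _ _ _ => le_rfl, fun _ => hC0⟩, ?_⟩
  intro u hu hur
  obtain ⟨hju, hjub⟩ := hjet u hu
  have hεM : J * (K * sobNorm ς u) ≤ M := by
    refine le_trans ?_ (le_max_right _ _)
    gcongr
  refine ⟨?_, ?_, ?_, ?_⟩
  · have h1 := symNorm_prod_le m s (fun x => G (jet u x)) f hf.2.2 (A * (J * (K * sobNorm ς u)))
      (by have := hnn u; positivity)
      (pdL_bound s _ ((hG.of_le (by exact_mod_cast le_top)).comp hju) _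
        (fun n hn x => hA (jet u) hju x _ hεM (fun k hk => hjub k hk x) n hn))
    refine h1.trans ?_
    calc _ = S * (A * (J * K)) * sobNorm ς u := by ring
      _ ≤ _ := mul_le_mul_of_nonneg_right hC1 (hnn u)
  · intro h₁ h₂ hh₁ hh₂ x ξ
    have hj : jet (h₁ + h₂) x = jet h₁ x + jet h₂ x := by
      ext l
      refine Fin.cases ?_ (fun i => ?_) l
      · simp [jet]
      · simp [jet, pdF, fderiv_add (hdiff h₁ hh₁ x) (hdiff h₂ hh₂ x)]
    simp only [nemSymDu, hj, Pi.add_apply, mul_add, Finset.sum_add_distrib, add_mul]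
  · intro z h hh x ξ
    have hj : ∀ l, jet (fun y => z * h y) x l = z * jet h x l := by
      intro l
      refine Fin.cases ?_ (fun i => ?_) l
      · simp [jet]
      · simp only [jet, Fin.cons_succ]
        rw [pdF_const_mul]
    simp only [nemSymDu, hj]
    rw [← mul_assoc, Finset.mul_sum]
    congr 1
    apply Finset.sum_congr rfl
    intro l _
    ring
  · intro h hh
    obtain ⟨hjh, hjhb⟩ := hjet h hh
    have key : ∀ (c : Bool) (w : Fin (d + 1) → Fn d), (∀ l, ContDiff ℝ (s : ℕ∞) (w l)) →
        (∀ l, ∀ k ≤ s, ∀ x, ‖iteratedFDeriv ℝ k (w l) x‖ ≤ J * (K * sobNorm ς h)) →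
        symNorm m s (fun x ξ => (∑ l, wdSel c l G (jet u x) * w l x) * f ξ) ≤ C * sobNorm ς h := by
      intro c w hw hwb
      have hsb := sum_mul_bound s (fun l x => wdSel c l G (jet u x)) w A2
        (J * (K * sobNorm ς h)) hA20
        (fun l => ((hH c l).of_le (by exact_mod_cast le_top)).comp hju) hw
        (fun l k hk x => (hA' c l (jet u) hju x
          (fun k hk => (hjub k hk x).trans hεM) k hk).trans (hA2le c l)) hwb
        (by have := hnn h; positivity)
      have h1 := symNorm_prod_le m s (fun x => ∑ l, wdSel c l G (jet u x) * w l x) f hf.2.2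
        (E * (J * (K * sobNorm ς h)))
        (by have := hnn h; positivity)
        (pdL_bound s _ hsb.1 _ hsb.2)
      refine h1.trans ?_
      calc _ = S * (E * (J * K)) * sobNorm ς h := by ring
        _ ≤ _ := mul_le_mul_of_nonneg_right hC2 (hnn h)
    have hcomp : ∀ l, ContDiff ℝ (s : ℕ∞) (fun x => jet h x l) := fun l =>
      (contDiff_pi.1 hjh) l
    have hcompb : ∀ l, ∀ k ≤ s, ∀ x, ‖iteratedFDeriv ℝ k (fun x => jet h x l) x‖
        ≤ J * (K * sobNorm ς h) := by
      intro l k hk x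
      have e := (ContinuousLinearMap.proj (R := ℝ) (φ := fun _ : Fin (d + 1) => ℂ)
        l).norm_iteratedFDeriv_comp_left (x := x) (n := k) hjh.contDiffAt (by exact_mod_cast hk)
      have hp : ‖(ContinuousLinearMap.proj (R := ℝ) (φ := fun _ : Fin (d + 1) => ℂ) l)‖ ≤ 1 := by
        apply ContinuousLinearMap.opNorm_le_bound _ zero_le_one
        intro y
        rw [one_mul]
        exact norm_le_pi_norm y l
      refine le_trans e (le_trans ?_ (hjhb k hk x))
      calc _ ≤ 1 * ‖iteratedFDeriv ℝ k (jet h) x‖ := by gcongr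
        _ = _ := one_mul _
    constructor
    · exact key false (fun l x => jet h x l) hcomp hcompb
    · refine key true (fun l x => (starRingEnd ℂ) (jet h x l)) (fun l => ?_) ?_
      · exact Complex.conjCLE.contDiff.comp (hcomp l)
      · intro l k hk x
        have := Complex.conjLIE.norm_iteratedFDeriv_comp_left (fun x => jet h x l) x k
        exact le_trans (le_of_eq this) (hcompb l k hk x)

end QLNLS
end
end
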